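/- arXiv:2209.00898 — 3 statements merged into one kernel-verified Lean document; each statement's English description precedes it below -/
import Mathlib

section
/- Let ρ be a rank function on a skeletally small triangulated category C. Then for all composable morphisms f and g one has ρ(f ∘ g) ≤ ρ(f) and ρ(f ∘ g) ≤ ρ(g); for parallel morphisms f, g one has ρ(f + g) ≤ ρ(f) + ρ(g); and for a morphism given by an upper-triangular matrix one has ρ(f) + ρ(g) ≤ ρ of the matrix [[f, h],[0, g]]. -/
/-!
Statement 7: For a rank function `ρ` on a skeletally small triangulated category:
`ρ(f ∘ g) ≤ ρ(f)`, `ρ(f ∘ g) ≤ ρ(g)`, `ρ(f + g) ≤ ρ(f) + ρ(g)`, and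
`ρ(f) + ρ(g) ≤ ρ([[f, h], [0, g]])` for an upper-triangular matrix morphism.
-/

open CategoryTheory CategoryTheory.Limits CategoryTheory.Pretriangulated

universe v u

variable (C : Type u) [Category.{v} C] [Preadditive C] [HasZeroObject C] [HasShift C ℤ]
  [∀ n : ℤ, (shiftFunctor C n).Additive] [Pretriangulated C] [HasBinaryBiproducts C]
  [EssentiallySmall.{v} C]

/-- A rank function on a triangulated category. -/
structure RankFunction where
  rank : ∀ ⦃X Y : C⦄, (X ⟶ Y) → ℝ
  nonneg : ∀ ⦃X Y : C⦄ (f : X ⟶ Y), 0 ≤ rank f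
  additive : ∀ ⦃X₁ Y₁ X₂ Y₂ : C⦄ (f : X₁ ⟶ Y₁) (g : X₂ ⟶ Y₂),
    rank (biprod.map f g) = rank f + rank g
  rankNullity : ∀ (T : Triangle C), (T ∈ distTriang C) →
    rank T.mor₁ + rank T.mor₂ = rank (𝟙 T.obj₂)
  shiftInv : ∀ ⦃X Y : C⦄ (f : X ⟶ Y),
    rank ((shiftFunctor C (1 : ℤ)).map f) = rank f

variable {C}

set_option linter.unusedSectionVars false

theorem RankFunction.coy1 {X Y Z T : C} {f : X ⟶ Y} {g : Y ⟶ Z}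
    {h : Z ⟶ X⟦(1 : ℤ)⟧} (H : Triangle.mk f g h ∈ distTriang C) (t : T ⟶ X⟦(1 : ℤ)⟧)
    (ht : t ≫ f⟦(1 : ℤ)⟧' = 0) : ∃ s : T ⟶ Z, t = s ≫ h :=
  Triangle.coyoneda_exact₁ _ H t ht

theorem RankFunction.coy2 {X Y Z T : C} {f : X ⟶ Y} {g : Y ⟶ Z}
    {h : Z ⟶ X⟦(1 : ℤ)⟧} (H : Triangle.mk f g h ∈ distTriang C) (t : T ⟶ Y)
    (ht : t ≫ g = 0) : ∃ s : T ⟶ X, t = s ≫ f :=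
  Triangle.coyoneda_exact₂ _ H t ht

theorem RankFunction.coy3 {X Y Z T : C} {f : X ⟶ Y} {g : Y ⟶ Z}
    {h : Z ⟶ X⟦(1 : ℤ)⟧} (H : Triangle.mk f g h ∈ distTriang C) (t : T ⟶ Z)
    (ht : t ≫ h = 0) : ∃ s : T ⟶ Y, t = s ≫ g :=
  Triangle.coyoneda_exact₃ _ H t ht

theorem RankFunction.coy1r {X Y Z T : C} {f : X ⟶ Y} {g : Y ⟶ Z}
    {h : Z ⟶ X⟦(1 : ℤ)⟧} (H : Triangle.mk f g h ∈ distTriang C) (t : T ⟶ Y⟦(1 : ℤ)⟧)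
    (ht : t ≫ g⟦(1 : ℤ)⟧' = 0) : ∃ s : T ⟶ X⟦(1 : ℤ)⟧, t = s ≫ (-f⟦(1 : ℤ)⟧') :=
  Triangle.coyoneda_exact₁ _ (rot_of_distTriang _ H) t ht

theorem RankFunction.compl {X Y Z X' Y' Z' : C} {f : X ⟶ Y} {g : Y ⟶ Z}
    {h : Z ⟶ X⟦(1 : ℤ)⟧} (H : Triangle.mk f g h ∈ distTriang C) {f' : X' ⟶ Y'} {g' : Y' ⟶ Z'}
    {h' : Z' ⟶ X'⟦(1 : ℤ)⟧} (H' : Triangle.mk f' g' h' ∈ distTriang C)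
    (a : X ⟶ X') (b : Y ⟶ Y') (w : f ≫ b = a ≫ f') :
    ∃ c : Z ⟶ Z', g ≫ c = b ≫ g' ∧ h ≫ a⟦(1 : ℤ)⟧' = c ≫ h' :=
  complete_distinguished_triangle_morphism _ _ H H' a b w

theorem RankFunction.dist_eq (ρ : RankFunction C) {X Y Z : C} {f : X ⟶ Y} {g : Y ⟶ Z}
    {h : Z ⟶ X⟦(1 : ℤ)⟧} (H : Triangle.mk f g h ∈ distTriang C) :
    ρ.rank f + ρ.rank g = ρ.rank (𝟙 Y) :=
  ρ.rankNullity _ H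

theorem RankFunction.rank_iso_comp (ρ : RankFunction C) {X' X Y : C} (e : X' ≅ X) (f : X ⟶ Y) :
    ρ.rank (e.hom ≫ f) = ρ.rank f := by
  obtain ⟨Z, g, h, H⟩ := distinguished_cocone_triangle f
  have H' : Triangle.mk (e.hom ≫ f) g (h ≫ e.inv⟦(1 : ℤ)⟧') ∈ distTriang C := by
    refine isomorphic_distinguished _ H _ ?_
    refine Triangle.isoMk _ _ e (Iso.refl _) (Iso.refl _) ?_ ?_ ?_
    · exact Category.comp_id _
    · exact (Category.comp_id _).trans (Category.id_comp _).symm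
    · change (h ≫ e.inv⟦(1 : ℤ)⟧') ≫ e.hom⟦(1 : ℤ)⟧' = 𝟙 _ ≫ h
      rw [Category.assoc, ← Functor.map_comp, e.inv_hom_id, CategoryTheory.Functor.map_id, Category.comp_id,
        Category.id_comp]
  have h1 := ρ.dist_eq H
  have h2 := ρ.dist_eq H'
  linarith

open ZeroObject in
theorem RankFunction.rank_to_zero (ρ : RankFunction C) (X : C) :
    ρ.rank (0 : X ⟶ (0 : C)) = 0 := by
  have := ρ.dist_eq (contractible_distinguished X)
  linarith

open ZeroObject in
theorem RankFunction.rank_eq_of_factor (ρ : RankFunction C) {E D Y : C} (p : E ⟶ Y) (p' : D ⟶ Y)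
    (a : E ⟶ D) (b : D ⟶ E) (ha : a ≫ p' = p) (hb : b ≫ p = p') :
    ρ.rank p = ρ.rank p' := by
  let e : E ⊞ D ≅ D ⊞ E :=
    { hom := biprod.desc (biprod.lift a (𝟙 E)) (biprod.lift (𝟙 D - b ≫ a) (-b))
      inv := biprod.desc (biprod.lift b (𝟙 D)) (biprod.lift (𝟙 E - a ≫ b) (-a))
      hom_inv_id := by ext <;> simp
      inv_hom_id := by ext <;> simp }
  have he : e.hom ≫ biprod.map p' (0 : E ⟶ (0 : C)) = biprod.map p (0 : D ⟶ (0 : C)) := by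
    ext <;> simp [e, ha, hb]
  have h1 := ρ.rank_iso_comp e (biprod.map p' (0 : E ⟶ (0 : C)))
  rw [he, ρ.additive, ρ.additive, ρ.rank_to_zero, ρ.rank_to_zero] at h1
  linarith

/-- Rank-nullity for exact pairs. -/
theorem RankFunction.exact_eq (ρ : RankFunction C) {A E B : C} (q : A ⟶ E) (p : E ⟶ B)
    (w : q ≫ p = 0) (ex : ∀ ⦃T : C⦄ (t : T ⟶ E), t ≫ p = 0 → ∃ s : T ⟶ A, t = s ≫ q) :
    ρ.rank q + ρ.rank p = ρ.rank (𝟙 E) := by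
  obtain ⟨W, i, d, H⟩ := distinguished_cocone_triangle₁ p
  obtain ⟨s, hs⟩ := ex i (comp_distTriang_mor_zero₁₂ _ H)
  obtain ⟨t, ht⟩ := RankFunction.coy2 H q w
  rw [ρ.rank_eq_of_factor q i t s ht.symm hs.symm]
  exact ρ.dist_eq H

theorem RankFunction.rank_id_shift (ρ : RankFunction C) (X : C) :
    ρ.rank (𝟙 (X⟦(1 : ℤ)⟧)) = ρ.rank (𝟙 X) := by
  rw [← (shiftFunctor C (1 : ℤ)).map_id, ρ.shiftInv]

theorem RankFunction.rank_id_biprod (ρ : RankFunction C) (X Y : C) :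
    ρ.rank (𝟙 (X ⊞ Y)) = ρ.rank (𝟙 X) + ρ.rank (𝟙 Y) := by
  rw [← ρ.additive]
  congr 1
  ext <;> simp

theorem RankFunction.two_mul_rank (ρ : RankFunction C) {X Y Z : C} {f : X ⟶ Y} {g : Y ⟶ Z}
    {h : Z ⟶ X⟦(1 : ℤ)⟧} (H : Triangle.mk f g h ∈ distTriang C) :
    2 * ρ.rank f = ρ.rank (𝟙 X) + ρ.rank (𝟙 Y) - ρ.rank (𝟙 Z) := by
  have h1 := ρ.dist_eq H
  have h2 : ρ.rank g + ρ.rank h = ρ.rank (𝟙 Z) := ρ.dist_eq (rot_of_distTriang _ H)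
  have h3 := ρ.exact_eq h (f⟦(1 : ℤ)⟧') (comp_distTriang_mor_zero₃₁ _ H)
    (fun T t ht => RankFunction.coy1 H t ht)
  rw [ρ.shiftInv, ρ.rank_id_shift] at h3
  linarith

theorem RankFunction.left_eq (ρ : RankFunction C) {X Y Z K : C} (g : X ⟶ Y) (f : Y ⟶ Z)
    {k : Z ⟶ K} {l : K ⟶ X⟦(1 : ℤ)⟧} (H : Triangle.mk (g ≫ f) k l ∈ distTriang C) :
    ρ.rank f = ρ.rank (g ≫ f) + ρ.rank (f ≫ k) := by
  obtain ⟨D, a, b, H'⟩ := distinguished_cocone_triangle f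
  obtain ⟨φ, h1, h2⟩ := RankFunction.compl H H' g (𝟙 _) (by simp)
  rw [Category.id_comp] at h1
  have kl : k ≫ l = 0 := comp_distTriang_mor_zero₂₃ _ H
  have fa : f ≫ a = 0 := comp_distTriang_mor_zero₁₂ _ H'
  have gfk : (g ≫ f) ≫ k = 0 := comp_distTriang_mor_zero₁₂ _ H
  have bf : b ≫ f⟦(1 : ℤ)⟧' = 0 := comp_distTriang_mor_zero₃₁ _ H'
  have e1 := ρ.exact_eq (f ≫ k) (biprod.lift l φ)
    (by ext <;> simp [kl, h1, fa]) (by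
      intro T t ht
      have ht1 : t ≫ l = 0 := by simpa using ht =≫ biprod.fst
      have ht2 : t ≫ φ = 0 := by simpa using ht =≫ biprod.snd
      obtain ⟨s, hs⟩ := RankFunction.coy3 H t ht1
      obtain ⟨u, hu⟩ := RankFunction.coy2 H' s (by
        rw [← h1, ← Category.assoc, ← hs, ht2])
      exact ⟨u, by rw [hs, hu, Category.assoc]⟩)
  have e2 := ρ.exact_eq (biprod.lift l φ) (biprod.desc (g⟦(1 : ℤ)⟧') (-b))
    (by simp [h2]) (by
      intro T t ht
      obtain ⟨x, c, rfl⟩ : ∃ x c, t = biprod.lift x c :=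
        ⟨t ≫ biprod.fst, t ≫ biprod.snd, by ext <;> simp⟩
      have hxc : x ≫ g⟦(1 : ℤ)⟧' = c ≫ b := by
        simpa [add_neg_eq_zero] using ht
      obtain ⟨t, rfl⟩ := RankFunction.coy1 H x (by
        rw [Functor.map_comp, reassoc_of% hxc, bf, comp_zero])
      obtain ⟨s, hs⟩ := RankFunction.coy3 H' (c - t ≫ φ) (by
        rw [Preadditive.sub_comp, ← hxc, Category.assoc, Category.assoc, h2, sub_self])
      refine ⟨t + s ≫ k, ?_⟩
      ext
      · simp [kl]
      · simp [h1, ← hs])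
  have e3 := ρ.exact_eq (biprod.desc (g⟦(1 : ℤ)⟧') (-b)) ((f ≫ k)⟦(1 : ℤ)⟧')
    (by
      ext
      · simp [← Functor.map_comp, ← Category.assoc, gfk]
      · simp [reassoc_of% bf]) (by
      intro T y hy
      obtain ⟨z, hz⟩ := RankFunction.coy1r H (y ≫ f⟦(1 : ℤ)⟧') (by
        simpa using hy)
      obtain ⟨c, hc⟩ := RankFunction.coy1 H' (y + z ≫ g⟦(1 : ℤ)⟧') (by
        rw [Preadditive.add_comp, hz]
        simp)
      refine ⟨biprod.lift (-z) (-c), ?_⟩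
      simp [← hc])
  have r1 := ρ.two_mul_rank H
  have r2 := ρ.two_mul_rank H'
  rw [ρ.rank_id_biprod, ρ.rank_id_shift] at e2
  rw [ρ.rank_id_shift, ρ.shiftInv] at e3
  linarith

theorem RankFunction.right_eq (ρ : RankFunction C) {X Y Z K : C} (g : X ⟶ Y) (f : Y ⟶ Z)
    {k : Z ⟶ K} {l : K ⟶ X⟦(1 : ℤ)⟧} (H : Triangle.mk (g ≫ f) k l ∈ distTriang C) :
    ρ.rank g = ρ.rank (g ≫ f) + ρ.rank (l ≫ g⟦(1 : ℤ)⟧') := by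
  obtain ⟨D, a, b, H'⟩ := distinguished_cocone_triangle g
  obtain ⟨φ, h1, h2⟩ := RankFunction.compl H' H (𝟙 _) f (by simp)
  rw [CategoryTheory.Functor.map_id, Category.comp_id] at h2
  have kl : k ≫ l = 0 := comp_distTriang_mor_zero₂₃ _ H
  have ga : g ≫ a = 0 := comp_distTriang_mor_zero₁₂ _ H'
  have gfk : (g ≫ f) ≫ k = 0 := comp_distTriang_mor_zero₁₂ _ H
  have lgf : l ≫ (g ≫ f)⟦(1 : ℤ)⟧' = 0 := comp_distTriang_mor_zero₃₁ _ H
  have bg : b ≫ g⟦(1 : ℤ)⟧' = 0 := comp_distTriang_mor_zero₃₁ _ H'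
  have e1 := ρ.exact_eq (biprod.lift f a) (biprod.desc k (-φ))
    (by simp [h1]) (by
      intro T t ht
      obtain ⟨z, c, rfl⟩ : ∃ x c, t = biprod.lift x c :=
        ⟨t ≫ biprod.fst, t ≫ biprod.snd, by ext <;> simp⟩
      have hzc : z ≫ k = c ≫ φ := by
        simpa [add_neg_eq_zero] using ht
      obtain ⟨y, rfl⟩ := RankFunction.coy3 H' c (by
        rw [h2, ← reassoc_of% hzc, kl, comp_zero])
      obtain ⟨x, hx⟩ := RankFunction.coy2 H (z - y ≫ f) (by
        rw [Preadditive.sub_comp, hzc, Category.assoc, Category.assoc, h1, sub_self])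
      refine ⟨y + x ≫ g, ?_⟩
      ext
      · simp [← hx]
      · simp [ga])
  have e2 := ρ.exact_eq (biprod.desc k (-φ)) (l ≫ g⟦(1 : ℤ)⟧')
    (by
      ext
      · simp [reassoc_of% kl]
      · simp [← reassoc_of% h2, bg]) (by
      intro T t ht
      obtain ⟨c, hc⟩ := RankFunction.coy1 H' (t ≫ l) (by simpa using ht)
      obtain ⟨z, hz⟩ := RankFunction.coy3 H (t - c ≫ φ) (by
        rw [Preadditive.sub_comp, hc, Category.assoc, ← h2, sub_self])
      refine ⟨biprod.lift z (-c), ?_⟩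
      simp [← hz])
  have e3 := ρ.exact_eq (l ≫ g⟦(1 : ℤ)⟧') ((biprod.lift f a)⟦(1 : ℤ)⟧')
    (by
      have : g ≫ biprod.lift f a = (g ≫ f) ≫ biprod.inl := by
        ext <;> simp [ga]
      rw [Category.assoc, ← Functor.map_comp, this, Functor.map_comp, reassoc_of% lgf, zero_comp])
    (by
      intro T y hy
      have hyf : y ≫ f⟦(1 : ℤ)⟧' = 0 := by
        simpa [← Functor.map_comp] using hy =≫ (biprod.fst)⟦(1 : ℤ)⟧'
      have hya : y ≫ a⟦(1 : ℤ)⟧' = 0 := by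
        simpa [← Functor.map_comp] using hy =≫ (biprod.snd)⟦(1 : ℤ)⟧'
      obtain ⟨x, hx⟩ := RankFunction.coy1r H' y hya
      obtain ⟨t, ht⟩ := RankFunction.coy1 H (-x) (by
        rw [Functor.map_comp, ← hyf, hx]
        simp)
      exact ⟨t, by rw [hx, ← reassoc_of% ht]; simp⟩)
  have r1 := ρ.two_mul_rank H
  have r2 := ρ.two_mul_rank H'
  rw [ρ.rank_id_biprod] at e1
  rw [ρ.rank_id_shift, ρ.shiftInv] at e3
  linarith

theorem RankFunction.comp_le_left (ρ : RankFunction C) {X Y Z : C} (g : X ⟶ Y) (f : Y ⟶ Z) :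
    ρ.rank (g ≫ f) ≤ ρ.rank f := by
  obtain ⟨K, k, l, H⟩ := distinguished_cocone_triangle (g ≫ f)
  have := ρ.left_eq g f H
  have := ρ.nonneg (f ≫ k)
  linarith

theorem RankFunction.comp_le_right (ρ : RankFunction C) {X Y Z : C} (g : X ⟶ Y) (f : Y ⟶ Z) :
    ρ.rank (g ≫ f) ≤ ρ.rank g := by
  obtain ⟨K, k, l, H⟩ := distinguished_cocone_triangle (g ≫ f)
  have := ρ.right_eq g f H
  have := ρ.nonneg (l ≫ g⟦(1 : ℤ)⟧')
  linarith

theorem rankFunction_inequalities (ρ : RankFunction C) :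
    (∀ ⦃X Y Z : C⦄ (g : X ⟶ Y) (f : Y ⟶ Z),
      ρ.rank (g ≫ f) ≤ ρ.rank f ∧ ρ.rank (g ≫ f) ≤ ρ.rank g) ∧
    (∀ ⦃X Y : C⦄ (f g : X ⟶ Y), ρ.rank (f + g) ≤ ρ.rank f + ρ.rank g) ∧
    (∀ ⦃X₁ X₂ Y₁ Y₂ : C⦄ (f : X₁ ⟶ Y₁) (g : X₂ ⟶ Y₂) (h : X₂ ⟶ Y₁),
      ρ.rank f + ρ.rank g ≤
        ρ.rank (biprod.desc (biprod.lift f 0) (biprod.lift h g))) := by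
  refine ⟨fun X Y Z g f => ⟨ρ.comp_le_left g f, ρ.comp_le_right g f⟩, ?_, ?_⟩
  · intro X Y f g
    have h : f + g = biprod.lift (𝟙 X) (𝟙 X) ≫ biprod.map f g ≫ biprod.desc (𝟙 Y) (𝟙 Y) := by
      have e : biprod.map f g ≫ biprod.desc (𝟙 Y) (𝟙 Y) = biprod.desc f g := by
        ext <;> simp
      rw [e, biprod.lift_desc, Category.id_comp, Category.id_comp]
    rw [h, ← ρ.additive]
    exact (ρ.comp_le_left _ _).trans (ρ.comp_le_right _ _)
  · intro X₁ X₂ Y₁ Y₂ f g h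
    set M := biprod.desc (biprod.lift f (0 : X₁ ⟶ Y₂)) (biprod.lift h g) with hM
    obtain ⟨K, k, l, H⟩ := distinguished_cocone_triangle (M ≫ biprod.snd)
    rw [ρ.right_eq M biprod.snd H]
    have hg : ρ.rank g ≤ ρ.rank (M ≫ biprod.snd) := by
      have : g = biprod.inr ≫ M ≫ biprod.snd := by simp [hM]
      conv_lhs => rw [this]
      exact ρ.comp_le_left _ _
    have hf : ρ.rank f ≤ ρ.rank (l ≫ M⟦(1 : ℤ)⟧') := by
      obtain ⟨s, hs⟩ := RankFunction.coy1 H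
        ((biprod.inl : X₁ ⟶ X₁ ⊞ X₂)⟦(1 : ℤ)⟧') (by
          rw [← Functor.map_comp]
          simp [hM])
      have e : f⟦(1 : ℤ)⟧' = s ≫ (l ≫ M⟦(1 : ℤ)⟧') ≫ (biprod.fst)⟦(1 : ℤ)⟧' := by
        rw [Category.assoc, ← reassoc_of% hs, ← Functor.map_comp, ← Functor.map_comp]
        simp [hM]
      rw [← ρ.shiftInv f, e]
      exact (ρ.comp_le_left _ _).trans (ρ.comp_le_right _ _)
    linarith
end

section
/- Every integral rank function on a skeletally small triangulated category C can be decomposed in a unique way as a locally finite sum of irreducible rank functions on C. -/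
/-!
Statement 9: Every integral rank function on a skeletally small triangulated category `C`
can be decomposed in a unique way as a locally finite sum of irreducible rank functions.
-/

open CategoryTheory CategoryTheory.Limits CategoryTheory.Pretriangulated

universe v u

variable (C : Type u) [Category.{v} C] [Preadditive C] [HasZeroObject C] [HasShift C ℤ]
  [∀ n : ℤ, (shiftFunctor C n).Additive] [Pretriangulated C] [HasBinaryBiproducts C]
  [EssentiallySmall.{v} C]

variable {C}

/-- Integral rank function. -/
def RankFunction.Integral (ρ : RankFunction C) : Prop :=
  ∀ ⦃X Y : C⦄ (f : X ⟶ Y), ∃ n : ℤ, ρ.rank f = n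

/-- Non-zero rank function. -/
def RankFunction.Nonzero (ρ : RankFunction C) : Prop :=
  ∃ (X Y : C) (f : X ⟶ Y), ρ.rank f ≠ 0

/-- An irreducible rank function: integral, non-zero, and not the sum of two non-zero
integral rank functions. -/
def RankFunction.Irreducible (ρ : RankFunction C) : Prop :=
  ρ.Integral ∧ ρ.Nonzero ∧
    ¬ ∃ σ τ : RankFunction C, σ.Integral ∧ τ.Integral ∧ σ.Nonzero ∧ τ.Nonzero ∧
      ∀ ⦃X Y : C⦄ (f : X ⟶ Y), ρ.rank f = σ.rank f + τ.rank f

/-- `fam` is a locally finite decomposition of `ρ` into irreducible rank functions. -/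
def RankFunction.IsDecomposition (ρ : RankFunction C) {I : Type (max u v)}
    (fam : I → RankFunction C) : Prop :=
  (∀ i, (fam i).Irreducible) ∧
  (∀ ⦃X Y : C⦄ (f : X ⟶ Y), {i | (fam i).rank f ≠ 0}.Finite) ∧
  (∀ ⦃X Y : C⦄ (f : X ⟶ Y), ρ.rank f = ∑ᶠ i, (fam i).rank f)

section Helpers

set_option linter.unusedSectionVars false
open scoped ZeroObject

/-- exactness of `im (a ≫ f) ⊆ im f → im (f ≫ b)` -/
def Ex {X' X Y Z : C} (f : X ⟶ Y) (a : X' ⟶ X) (b : Y ⟶ Z) : Prop :=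
  a ≫ f ≫ b = 0 ∧ ∀ ⦃T : C⦄ (t : T ⟶ X), t ≫ f ≫ b = 0 → ∃ s : T ⟶ X', t ≫ f = s ≫ a ≫ f

/-- additive on exact sequences -/
def IsAdd (φ : ∀ ⦃X Y : C⦄, (X ⟶ Y) → ℝ) : Prop :=
  ∀ ⦃X' X Y Z : C⦄ (f : X ⟶ Y) (a : X' ⟶ X) (b : Y ⟶ Z), Ex f a b →
    φ f = φ (a ≫ f) + φ (f ≫ b)

section Tri
variable {X Y Z : C} {f : X ⟶ Y} {g : Y ⟶ Z} {h : Z ⟶ X⟦(1:ℤ)⟧}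

lemma tri_z12 (hT : Triangle.mk f g h ∈ distTriang C) : f ≫ g = 0 :=
  comp_distTriang_mor_zero₁₂ _ hT

lemma tri_z23 (hT : Triangle.mk f g h ∈ distTriang C) : g ≫ h = 0 :=
  comp_distTriang_mor_zero₂₃ _ hT

lemma tri_z31 (hT : Triangle.mk f g h ∈ distTriang C) : h ≫ f⟦(1:ℤ)⟧' = 0 :=
  comp_distTriang_mor_zero₃₁ _ hT

lemma tri_e2 (hT : Triangle.mk f g h ∈ distTriang C) ⦃T : C⦄ (t : T ⟶ Y) (ht : t ≫ g = 0) :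
    ∃ s : T ⟶ X, t = s ≫ f := Triangle.coyoneda_exact₂ _ hT t ht

lemma tri_e3 (hT : Triangle.mk f g h ∈ distTriang C) ⦃T : C⦄ (t : T ⟶ Z) (ht : t ≫ h = 0) :
    ∃ s : T ⟶ Y, t = s ≫ g := Triangle.coyoneda_exact₃ _ hT t ht

lemma tri_e1 (hT : Triangle.mk f g h ∈ distTriang C) ⦃T : C⦄ (t : T ⟶ X⟦(1:ℤ)⟧)
    (ht : t ≫ f⟦(1:ℤ)⟧' = 0) :
    ∃ s : T ⟶ Z, t = s ≫ h := Triangle.coyoneda_exact₁ _ hT t ht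

lemma tri_rot (hT : Triangle.mk f g h ∈ distTriang C) :
    Triangle.mk g h (-f⟦(1:ℤ)⟧') ∈ distTriang C := rot_of_distTriang _ hT

lemma tri_map {X' Y' Z' : C} {f' : X' ⟶ Y'} {g' : Y' ⟶ Z'} {h' : Z' ⟶ X'⟦(1:ℤ)⟧}
    (hT : Triangle.mk f g h ∈ distTriang C) (hT' : Triangle.mk f' g' h' ∈ distTriang C)
    (a : X ⟶ X') (b : Y ⟶ Y') (hab : f ≫ b = a ≫ f') :
    ∃ c : Z ⟶ Z', g ≫ c = b ≫ g' ∧ h ≫ a⟦(1:ℤ)⟧' = c ≫ h' :=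
  complete_distinguished_triangle_morphism _ _ hT hT' a b hab

lemma tri_rn (ρ : RankFunction C) (hT : Triangle.mk f g h ∈ distTriang C) :
    ρ.rank f + ρ.rank g = ρ.rank (𝟙 Y) := ρ.rankNullity _ hT

end Tri

namespace RankFunction

lemma rank_iso_comp_s9 (ρ : RankFunction C) {X X' Y : C} (e : X' ≅ X) (f : X ⟶ Y) :
    ρ.rank (e.hom ≫ f) = ρ.rank f := by
  obtain ⟨Z, g, h, hT⟩ := distinguished_cocone_triangle f
  have h1 := tri_rn ρ hT
  have hT' : Triangle.mk (e.hom ≫ f) g (h ≫ e.inv⟦(1:ℤ)⟧') ∈ distTriang C := by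
    refine isomorphic_distinguished _ hT _ (Triangle.isoMk _ _ e (Iso.refl _) (Iso.refl _) ?_ ?_ ?_)
    · exact Category.comp_id _
    · exact (Category.comp_id _).trans (Category.id_comp _).symm
    · change (h ≫ e.inv⟦(1:ℤ)⟧') ≫ e.hom⟦(1:ℤ)⟧' = 𝟙 Z ≫ h
      rw [Category.assoc, ← Functor.map_comp]; simp
  have h2 := tri_rn ρ hT'
  linarith

lemma rank_comp_iso (ρ : RankFunction C) {X Y Y' : C} (e : Y ≅ Y') (f : X ⟶ Y) :
    ρ.rank (f ≫ e.hom) = ρ.rank f := by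
  obtain ⟨Z, g, h, hT⟩ := distinguished_cocone_triangle₁ f
  have h1 := tri_rn ρ hT
  have hT' : Triangle.mk g (f ≫ e.hom) (e.inv ≫ h) ∈ distTriang C := by
    refine isomorphic_distinguished _ hT _
      (Triangle.isoMk _ _ (Iso.refl _) (Iso.refl _) e.symm ?_ ?_ ?_)
    · exact (Category.comp_id _).trans (Category.id_comp _).symm
    · change (f ≫ e.hom) ≫ e.inv = 𝟙 X ≫ f
      simp
    · change (e.inv ≫ h) ≫ (𝟙 Z)⟦(1:ℤ)⟧' = e.inv ≫ h
      simp
  have h2 := tri_rn ρ hT'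
  linarith

lemma rank_to_zero_s9 (ρ : RankFunction C) (X : C) : ρ.rank (0 : X ⟶ (0 : C)) = 0 := by
  have : ρ.rank (𝟙 X) + ρ.rank (0 : X ⟶ (0 : C)) = ρ.rank (𝟙 X) :=
    ρ.rankNullity _ (contractible_distinguished X)
  linarith

lemma rank_desc (ρ : RankFunction C) {W W' Y : C} (h : W ⟶ Y) (s : W' ⟶ W) :
    ρ.rank (biprod.desc h (s ≫ h)) = ρ.rank h := by
  let e : W ⊞ W' ≅ W ⊞ W' :=
    { hom := biprod.desc biprod.inl (s ≫ biprod.inl + biprod.inr)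
      inv := biprod.desc biprod.inl (- s ≫ biprod.inl + biprod.inr)
      hom_inv_id := by ext <;> simp
      inv_hom_id := by ext <;> simp }
  let e' : Y ⊞ (0 : C) ≅ Y :=
    { hom := biprod.fst
      inv := biprod.inl
      hom_inv_id := by
        ext
        simp
      inv_hom_id := by simp }
  have : biprod.desc h (s ≫ h) = e.hom ≫ biprod.map h (0 : W' ⟶ (0 : C)) ≫ e'.hom := by
    ext <;> simp [e, e']
  rw [this, rank_iso_comp_s9, rank_comp_iso, ρ.additive, rank_to_zero_s9, add_zero]

lemma rank_eq_of_image (ρ : RankFunction C) {W W' Y : C} (h : W ⟶ Y) (h' : W' ⟶ Y)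
    (s : W' ⟶ W) (s' : W ⟶ W') (hs : h' = s ≫ h) (hs' : h = s' ≫ h') :
    ρ.rank h = ρ.rank h' := by
  have h1 := ρ.rank_desc h s
  have h2 := ρ.rank_desc h' s'
  rw [← hs] at h1
  rw [← hs'] at h2
  have h3 : biprod.desc h h' = (biprod.braiding W W').hom ≫ biprod.desc h' h := by
    ext <;> simp
  rw [h3, rank_iso_comp_s9] at h1
  linarith

lemma rank_exact (ρ : RankFunction C) {A B D : C} (u : A ⟶ B) (w : B ⟶ D) (h0 : u ≫ w = 0)
    (hex : ∀ ⦃T : C⦄ (t : T ⟶ B), t ≫ w = 0 → ∃ s, t = s ≫ u) :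
    ρ.rank u + ρ.rank w = ρ.rank (𝟙 B) := by
  obtain ⟨K, k, h, hT⟩ := distinguished_cocone_triangle₁ w
  have h1 := tri_rn ρ hT
  have h2 := tri_z12 hT
  obtain ⟨s, hs⟩ := hex k h2
  obtain ⟨s', hs'⟩ := tri_e2 hT u h0
  rw [ρ.rank_eq_of_image u k s s' hs hs']
  exact h1

lemma rank_eq_of_ker (ρ : RankFunction C) {X Y Y' : C} (f : X ⟶ Y) (g : X ⟶ Y')
    (h : ∀ ⦃T : C⦄ (t : T ⟶ X), t ≫ f = 0 ↔ t ≫ g = 0) : ρ.rank f = ρ.rank g := by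
  obtain ⟨K, k, l, hT⟩ := distinguished_cocone_triangle₁ f
  have h1 := tri_rn ρ hT
  have h2 := tri_z12 hT
  have h3 := ρ.rank_exact k g ((h k).1 h2)
    (fun T t ht => tri_e2 hT t ((h t).2 ht))
  linarith

lemma two_rank (ρ : RankFunction C) {X Y Z : C} (f : X ⟶ Y) (g : Y ⟶ Z) (h : Z ⟶ X⟦(1:ℤ)⟧)
    (hT : Triangle.mk f g h ∈ distTriang C) :
    2 * ρ.rank f = ρ.rank (𝟙 X) + ρ.rank (𝟙 Y) - ρ.rank (𝟙 Z) := by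
  have h1 := tri_rn ρ hT
  have h2 := tri_rn ρ (tri_rot hT)
  have h3 := ρ.rank_exact h (f⟦(1:ℤ)⟧') (tri_z31 hT)
    (fun T t ht => tri_e1 hT t ht)
  have h4 := ρ.shiftInv f
  have h5 := ρ.shiftInv (𝟙 X)
  rw [CategoryTheory.Functor.map_id] at h5
  linarith

lemma isAdd_aux (ρ : RankFunction C) {X' X Y Z : C} (f : X ⟶ Y) (a : X' ⟶ X) (b : Y ⟶ Z)
    (e : Z ⟶ X'⟦(1:ℤ)⟧) (hT1 : Triangle.mk (a ≫ f) b e ∈ distTriang C) :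
    ρ.rank f = ρ.rank (a ≫ f) + ρ.rank (f ≫ b) := by
  obtain ⟨F, p, q, hT2⟩ := distinguished_cocone_triangle f
  obtain ⟨B, p', q', hT3⟩ := distinguished_cocone_triangle (f ≫ b)
  obtain ⟨c, hc1, hc2⟩ := tri_map hT2 hT3 (𝟙 X) b (by simp)
  obtain ⟨W, π, δ, hT4⟩ := distinguished_cocone_triangle c
  have r1 := ρ.two_rank _ _ _ hT1
  have r2 := ρ.two_rank _ _ _ hT2
  have r3 := ρ.two_rank _ _ _ hT3
  have r4 := tri_rn ρ hT4
  have z1 : (a ≫ f) ≫ b = 0 := tri_z12 hT1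
  have z1' : b ≫ e = 0 := tri_z23 hT1
  have z1'' : e ≫ (a ≫ f)⟦(1:ℤ)⟧' = 0 := tri_z31 hT1
  have z2 : f ≫ p = 0 := tri_z12 hT2
  have z2' : p ≫ q = 0 := tri_z23 hT2
  have z2'' : q ≫ f⟦(1:ℤ)⟧' = 0 := tri_z31 hT2
  have z3 : (f ≫ b) ≫ p' = 0 := tri_z12 hT3
  have z3' : p' ≫ q' = 0 := tri_z23 hT3
  have z3'' : q' ≫ (f ≫ b)⟦(1:ℤ)⟧' = 0 := tri_z31 hT3
  have z4 : c ≫ π = 0 := tri_z12 hT4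
  have z4' : π ≫ δ = 0 := tri_z23 hT4
  have e1 : ∀ ⦃T : C⦄ (t : T ⟶ Y), t ≫ b = 0 → ∃ s, t = s ≫ (a ≫ f) :=
    fun T t ht => tri_e2 hT1 t ht
  have e1' : ∀ ⦃T : C⦄ (t : T ⟶ Z), t ≫ e = 0 → ∃ s, t = s ≫ b :=
    fun T t ht => tri_e3 hT1 t ht
  have e1'' : ∀ ⦃T : C⦄ (t : T ⟶ X'⟦(1:ℤ)⟧), t ≫ (a ≫ f)⟦(1:ℤ)⟧' = 0 → ∃ s, t = s ≫ e :=
    fun T t ht => tri_e1 hT1 t ht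
  have e1s : ∀ ⦃T : C⦄ (t : T ⟶ Y⟦(1:ℤ)⟧), t ≫ b⟦(1:ℤ)⟧' = 0 →
      ∃ s, t = s ≫ (a ≫ f)⟦(1:ℤ)⟧' := fun T t ht => by
    obtain ⟨s, hs⟩ := tri_e1 (tri_rot hT1) t ht
    exact ⟨-s, by rw [hs]; simp⟩
  have e2 : ∀ ⦃T : C⦄ (t : T ⟶ Y), t ≫ p = 0 → ∃ s, t = s ≫ f :=
    fun T t ht => tri_e2 hT2 t ht
  have e2' : ∀ ⦃T : C⦄ (t : T ⟶ F), t ≫ q = 0 → ∃ s, t = s ≫ p :=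
    fun T t ht => tri_e3 hT2 t ht
  have e2'' : ∀ ⦃T : C⦄ (t : T ⟶ X⟦(1:ℤ)⟧), t ≫ f⟦(1:ℤ)⟧' = 0 → ∃ s, t = s ≫ q :=
    fun T t ht => tri_e1 hT2 t ht
  have e3 : ∀ ⦃T : C⦄ (t : T ⟶ Z), t ≫ p' = 0 → ∃ s, t = s ≫ (f ≫ b) :=
    fun T t ht => tri_e2 hT3 t ht
  have e3' : ∀ ⦃T : C⦄ (t : T ⟶ B), t ≫ q' = 0 → ∃ s, t = s ≫ p' :=
    fun T t ht => tri_e3 hT3 t ht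
  have e3'' : ∀ ⦃T : C⦄ (t : T ⟶ X⟦(1:ℤ)⟧), t ≫ (f ≫ b)⟦(1:ℤ)⟧' = 0 → ∃ s, t = s ≫ q' :=
    fun T t ht => tri_e1 hT3 t ht
  have e4 : ∀ ⦃T : C⦄ (t : T ⟶ B), t ≫ π = 0 → ∃ s, t = s ≫ c :=
    fun T t ht => tri_e2 hT4 t ht
  have e4' : ∀ ⦃T : C⦄ (t : T ⟶ W), t ≫ δ = 0 → ∃ s, t = s ≫ π :=
    fun T t ht => tri_e3 hT4 t ht
  have hc1 : p ≫ c = b ≫ p' := hc1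
  have hc2 : c ≫ q' = q := by simpa using hc2.symm
  -- common kernel computation
  have key : ∀ ⦃T : C⦄ (w : T ⟶ F) (y : T ⟶ Z), w ≫ c = y ≫ p' →
      ∃ s : T ⟶ Y, w = s ≫ p ∧ y = s ≫ b := by
    intro T w y h
    have hw : w ≫ q = 0 := by
      rw [← hc2, ← Category.assoc, h, Category.assoc, z3', comp_zero]
    obtain ⟨s, hs⟩ := e2' w hw
    have : (y - s ≫ b) ≫ p' = 0 := by
      rw [Preadditive.sub_comp, ← h, hs, Category.assoc, Category.assoc, hc1, sub_self]
    obtain ⟨r, hr⟩ := e3 _ this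
    refine ⟨s + r ≫ f, ?_, ?_⟩
    · rw [Preadditive.add_comp, Category.assoc, z2, comp_zero, add_zero, hs]
    · rw [Preadditive.add_comp, Category.assoc, ← hr]; abel
  have hmono : Mono c := by
    refine Preadditive.mono_of_cancel_zero _ ?_
    intro T t ht
    obtain ⟨s, h1, h2⟩ := key t 0 (by rw [ht, zero_comp])
    obtain ⟨u, hu⟩ := e1 s h2.symm
    rw [h1, hu, Category.assoc, Category.assoc, z2, comp_zero, comp_zero]
  have hδ : δ = 0 := Triangle.mor₃_eq_zero_of_mono₁ _ hT4 hmono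
  obtain ⟨i, hi⟩ := e4' (𝟙 W) (by rw [hδ, comp_zero])
  have k1 : ρ.rank c = ρ.rank (𝟙 F) := ρ.rank_eq_of_ker _ _ (fun T t => by
    rw [Category.comp_id]
    exact ⟨fun h => by rwa [← cancel_mono c, zero_comp], fun h => by rw [h, zero_comp]⟩)
  have k2 : ρ.rank π = ρ.rank (𝟙 W) :=
    ρ.rank_eq_of_image _ _ i π hi (by simp)
  have hcf : c ≫ q' ≫ f⟦(1:ℤ)⟧' = 0 := by rw [← Category.assoc, hc2, z2'']
  have hπi : ∃ s, 𝟙 B - π ≫ i = s ≫ c := e4 _ (by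
    rw [Preadditive.sub_comp, Category.assoc, ← hi]; simp)
  obtain ⟨s0, hs0⟩ := hπi
  have hqf : π ≫ i ≫ q' ≫ f⟦(1:ℤ)⟧' = q' ≫ f⟦(1:ℤ)⟧' := by
    have : (𝟙 B - π ≫ i) ≫ q' ≫ f⟦(1:ℤ)⟧' = 0 := by
      rw [hs0, Category.assoc, hcf, comp_zero]
    rw [Preadditive.sub_comp, Category.id_comp, sub_eq_zero] at this
    rw [Category.assoc] at this
    exact this.symm
  have k3 := ρ.rank_exact (p' ≫ π) (i ≫ q' ≫ f⟦(1:ℤ)⟧')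
    (by rw [Category.assoc, hqf, ← Category.assoc, z3', zero_comp])
    (by
      intro T t ht
      obtain ⟨w, hw⟩ := e2'' (t ≫ i ≫ q') (by simpa using ht)
      obtain ⟨y, hy⟩ := e3' (t ≫ i - w ≫ c) (by
        rw [Preadditive.sub_comp, Category.assoc, Category.assoc, hc2, hw, sub_self])
      refine ⟨y, ?_⟩
      rw [← Category.assoc, ← hy, Preadditive.sub_comp, Category.assoc, Category.assoc, z4,
        ← hi]
      simp)
  have k4 := ρ.rank_exact e ((a ≫ f)⟦(1:ℤ)⟧') z1'' e1''
  have k5 : ρ.rank (p' ≫ π) = ρ.rank e := ρ.rank_eq_of_ker _ _ (fun T y => by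
    constructor
    · intro h
      obtain ⟨w, hw⟩ := e4 (y ≫ p') (by rw [Category.assoc, h])
      obtain ⟨s, -, h2⟩ := key w y hw.symm
      rw [h2, Category.assoc, z1', comp_zero]
    · intro h
      obtain ⟨s, hs⟩ := e1' y h
      rw [hs, Category.assoc, ← Category.assoc b, ← hc1, Category.assoc, z4, comp_zero,
        comp_zero])
  have k6 : ρ.rank (i ≫ q' ≫ f⟦(1:ℤ)⟧') = ρ.rank ((a ≫ f)⟦(1:ℤ)⟧') := by
    obtain ⟨s, hs⟩ := e1s (i ≫ q' ≫ f⟦(1:ℤ)⟧') (by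
      rw [Category.assoc, Category.assoc, ← Functor.map_comp, z3'', comp_zero])
    obtain ⟨s', hs'⟩ := e3'' (a⟦(1:ℤ)⟧') (by
      rw [← Functor.map_comp, ← Category.assoc, z1, Functor.map_zero])
    refine ρ.rank_eq_of_image _ _ (s' ≫ π) s ?_ hs
    rw [Category.assoc, hqf, ← Category.assoc, ← hs', Functor.map_comp]
  have k7 := ρ.shiftInv (a ≫ f)
  have k8 := ρ.shiftInv (𝟙 X')
  rw [CategoryTheory.Functor.map_id] at k8
  linarith

lemma isAdd (ρ : RankFunction C) : IsAdd ρ.rank := by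
  intro X' X Y Z f a b h
  obtain ⟨Z', b', e, hT⟩ := distinguished_cocone_triangle (a ≫ f)
  rw [ρ.isAdd_aux f a b' e hT]
  congr 1
  refine ρ.rank_eq_of_ker _ _ (fun T t => ?_)
  have z : (a ≫ f) ≫ b' = 0 := tri_z12 hT
  constructor
  · intro ht
    obtain ⟨s, hs⟩ := tri_e2 hT (t ≫ f) (by simpa using ht)
    rw [← Category.assoc, hs, Category.assoc, Category.assoc, h.1, comp_zero]
  · intro ht
    obtain ⟨s, hs⟩ := h.2 t ht
    rw [← Category.assoc, hs, Category.assoc, z, comp_zero]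

end RankFunction

section AddFun
variable {φ : ∀ ⦃X Y : C⦄, (X ⟶ Y) → ℝ}

lemma IsAdd.zero (hφ : IsAdd φ) (X Y : C) : φ (0 : X ⟶ Y) = 0 := by
  have h := hφ (0 : X ⟶ Y) (𝟙 X) (𝟙 Y) ⟨by simp, fun T t _ => ⟨0, by simp⟩⟩
  simp only [Category.id_comp, Category.comp_id] at h
  linarith

lemma IsAdd.comp_mono (hφ : IsAdd φ) {X Y Z : C} (f : X ⟶ Y) (i : Y ⟶ Z) [Mono i] :
    φ (f ≫ i) = φ f := by
  have h := hφ f (0 : X ⟶ X) i ⟨by simp, fun T t ht => ⟨0, by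
    rw [← cancel_mono i]; simpa using ht⟩⟩
  rw [zero_comp, hφ.zero] at h
  linarith

lemma IsAdd.epi_comp (hφ : IsAdd φ) {X Y Z : C} (f : X ⟶ Y) (e : Z ⟶ X) (s : X ⟶ Z)
    (hs : s ≫ e = 𝟙 X) : φ (e ≫ f) = φ f := by
  have h := hφ f e (0 : Y ⟶ Y) ⟨by simp, fun T t ht => ⟨t ≫ s, by
    rw [Category.assoc, ← Category.assoc s, hs, Category.id_comp]⟩⟩
  rw [comp_zero, hφ.zero] at h
  linarith

/-- rank function from an additive function -/
def RankFunction.ofAdd (φ : ∀ ⦃X Y : C⦄, (X ⟶ Y) → ℝ) (hφ : IsAdd φ)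
    (h0 : ∀ ⦃X Y : C⦄ (f : X ⟶ Y), 0 ≤ φ f)
    (hs : ∀ ⦃X Y : C⦄ (f : X ⟶ Y), φ ((shiftFunctor C (1 : ℤ)).map f) = φ f) :
    RankFunction C where
  rank := φ
  nonneg := h0
  shiftInv := hs
  additive := by
    intro X₁ Y₁ X₂ Y₂ f g
    have h := hφ (biprod.map f g) biprod.inl biprod.snd ⟨by simp, fun T t ht => by
      refine ⟨t ≫ biprod.fst, ?_⟩
      simp only [biprod.map_snd] at ht
      ext
      · simp
      · simpa using ht⟩
    rw [h, biprod.inl_map, biprod.map_snd, hφ.comp_mono, hφ.epi_comp _ _ biprod.inr (by simp)]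
  rankNullity := by
    rintro ⟨X, Y, Z, f, g, h⟩ hT
    have hT : Triangle.mk f g h ∈ distTriang C := hT
    have h := hφ (𝟙 Y) f g ⟨by simpa using tri_z12 hT, fun T t ht => by
      obtain ⟨s, hs⟩ := tri_e2 hT t (by simpa using ht)
      exact ⟨s, by simpa using hs⟩⟩
    simp only [Category.id_comp, Category.comp_id] at h
    exact h.symm

end AddFun

lemma Ex.shift {X' X Y Z : C} {f : X ⟶ Y} {a : X' ⟶ X} {b : Y ⟶ Z} (h : Ex f a b) (n : ℤ) :
    Ex ((shiftFunctor C n).map f) ((shiftFunctor C n).map a) ((shiftFunctor C n).map b) := by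
  refine ⟨?_, ?_⟩
  · rw [← Functor.map_comp, ← Functor.map_comp, h.1, Functor.map_zero]
  · intro T t ht
    let e := (shiftFunctor C n).objObjPreimageIso T
    obtain ⟨t', ht'⟩ := (shiftFunctor C n).map_surjective (e.hom ≫ t)
    obtain ⟨s, hs⟩ := h.2 t' (by
      apply (shiftFunctor C n).map_injective
      rw [Functor.map_comp, Functor.map_comp, ht', Category.assoc, ht, comp_zero,
        Functor.map_zero])
    refine ⟨e.inv ≫ (shiftFunctor C n).map s, ?_⟩
    have h3 := congrArg (shiftFunctor C n).map hs
    rw [Functor.map_comp, ht', Functor.map_comp, Functor.map_comp] at h3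
    rw [Category.assoc, ← h3]
    simp

lemma IsAdd.unshift {φ : ∀ ⦃X Y : C⦄, (X ⟶ Y) → ℝ} (hφ : IsAdd φ) {X Y : C} (f : X ⟶ Y) :
    φ ((shiftFunctor C (1:ℤ)).map ((shiftFunctor C (-1:ℤ)).map f)) = φ f ∧
    φ ((shiftFunctor C (-1:ℤ)).map ((shiftFunctor C (1:ℤ)).map f)) = φ f := by
  constructor
  · have h := (shiftFunctorCompIsoId C (-1:ℤ) 1 (by simp)).hom.naturality f
    have : (shiftFunctor C (1:ℤ)).map ((shiftFunctor C (-1:ℤ)).map f) =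
      ((shiftFunctorCompIsoId C (-1:ℤ) 1 (by simp)).hom.app X ≫ f) ≫
        (shiftFunctorCompIsoId C (-1:ℤ) 1 (by simp)).inv.app Y := by
      rw [← cancel_mono ((shiftFunctorCompIsoId C (-1:ℤ) 1 (by simp)).hom.app Y), Category.assoc,
        Iso.inv_hom_id_app]
      exact h.trans (Category.comp_id _).symm
    rw [this, hφ.comp_mono, hφ.epi_comp _ _ ((shiftFunctorCompIsoId C (-1:ℤ) 1 (by simp)).inv.app X)
      (by simp)]
  · have h := (shiftFunctorCompIsoId C (1:ℤ) (-1) (by simp)).hom.naturality f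
    have : (shiftFunctor C (-1:ℤ)).map ((shiftFunctor C (1:ℤ)).map f) =
      ((shiftFunctorCompIsoId C (1:ℤ) (-1) (by simp)).hom.app X ≫ f) ≫
        (shiftFunctorCompIsoId C (1:ℤ) (-1) (by simp)).inv.app Y := by
      rw [← cancel_mono ((shiftFunctorCompIsoId C (1:ℤ) (-1) (by simp)).hom.app Y), Category.assoc,
        Iso.inv_hom_id_app]
      exact h.trans (Category.comp_id _).symm
    rw [this, hφ.comp_mono, hφ.epi_comp _ _ ((shiftFunctorCompIsoId C (1:ℤ) (-1) (by simp)).inv.app X)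
      (by simp)]

lemma RankFunction.shiftInv_neg (ρ : RankFunction C) {X Y : C} (f : X ⟶ Y) :
    ρ.rank ((shiftFunctor C (-1:ℤ)).map f) = ρ.rank f := by
  rw [← ρ.shiftInv, (ρ.isAdd.unshift f).1]

/-- filtration cost -/
inductive Dec (σ τ : RankFunction C) : ∀ ⦃X Y : C⦄, (X ⟶ Y) → ℕ → Prop
  | base {X Y : C} (f : X ⟶ Y) (n : ℕ) (h : (n : ℝ) = min (σ.rank f) (τ.rank f)) : Dec σ τ f n
  | step {X' X Y Z : C} (f : X ⟶ Y) (a : X' ⟶ X) (b : Y ⟶ Z) (g : X' ⟶ Y) (h : X ⟶ Z) (m n : ℕ)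
      (hex : Ex f a b) (hg : g = a ≫ f) (hh : h = f ≫ b) (h1 : Dec σ τ g m) (h2 : Dec σ τ h n) :
      Dec σ τ f (m + n)

lemma butterfly {X' X'' X Y Z Z' : C} {f : X ⟶ Y} {a : X' ⟶ X} {b : Y ⟶ Z} {c : X'' ⟶ X}
    {d : Y ⟶ Z'} (h : Ex f a b) (h' : Ex f c d) :
    ∃ (P Q : C) (p : P ⟶ X') (p' : P ⟶ X'') (q : Z ⟶ Q) (q' : Z' ⟶ Q),
      p ≫ a ≫ f = p' ≫ c ≫ f ∧ f ≫ b ≫ q = f ≫ d ≫ q' ∧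
      Ex (a ≫ f) p d ∧ Ex (c ≫ f) p' b ∧ Ex (f ≫ b) c q ∧ Ex (f ≫ d) a q' := by
  obtain ⟨P, k, l, hT⟩ := distinguished_cocone_triangle₁ (biprod.desc (a ≫ f) (-(c ≫ f)))
  obtain ⟨Q, r, l', hT'⟩ := distinguished_cocone_triangle (biprod.lift (f ≫ b) (-(f ≫ d)))
  have z1 := tri_z12 hT
  have z2 := tri_z12 hT'
  have e1 := tri_e2 hT
  have e2 := tri_e2 hT'
  have hp : (k ≫ biprod.fst) ≫ a ≫ f = (k ≫ biprod.snd) ≫ c ≫ f := by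
    rw [biprod.desc_eq] at z1
    simpa [sub_eq_zero, ← sub_eq_add_neg] using z1
  have hq : f ≫ b ≫ biprod.inl ≫ r = f ≫ d ≫ biprod.inr ≫ r := by
    rw [biprod.lift_eq] at z2
    simpa [sub_eq_zero, ← sub_eq_add_neg] using z2
  have pb : ∀ ⦃T : C⦄ (t : T ⟶ X') (u : T ⟶ X''), t ≫ a ≫ f = u ≫ c ≫ f →
      ∃ s, t = s ≫ k ≫ biprod.fst ∧ u = s ≫ k ≫ biprod.snd := by
    intro T t u htu
    obtain ⟨s, hs⟩ := e1 (biprod.lift t u) (by simp [htu])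
    refine ⟨s, ?_, ?_⟩
    · rw [← Category.assoc, ← hs, biprod.lift_fst]
    · rw [← Category.assoc, ← hs, biprod.lift_snd]
  refine ⟨P, Q, k ≫ biprod.fst, k ≫ biprod.snd, biprod.inl ≫ r, biprod.inr ≫ r, hp, hq,
    ⟨?_, ?_⟩, ⟨?_, ?_⟩, ⟨?_, ?_⟩, ⟨?_, ?_⟩⟩
  · have := congrArg (· ≫ d) hp
    simp only [Category.assoc] at this ⊢
    rw [this, h'.1]; simp
  · intro T t ht
    obtain ⟨u, hu⟩ := h'.2 (t ≫ a) (by simpa using ht)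
    obtain ⟨s, hs, -⟩ := pb t u (by simpa using hu)
    exact ⟨s, by rw [hs]; simp⟩
  · have := congrArg (· ≫ b) hp
    simp only [Category.assoc] at this ⊢
    rw [← this, h.1]; simp
  · intro T t ht
    obtain ⟨u, hu⟩ := h.2 (t ≫ c) (by simpa using ht)
    obtain ⟨s, -, hs⟩ := pb u t (by simpa using hu.symm)
    exact ⟨s, by rw [hs]; simp⟩
  · have := congrArg (c ≫ ·) hq
    have h1 := congrArg (· ≫ biprod.inr ≫ r) h'.1
    simp only [Category.assoc, zero_comp] at this h1 ⊢
    rw [this, h1]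
  · intro T t ht
    obtain ⟨x, hx⟩ := e2 (biprod.lift (t ≫ f ≫ b) 0) (by
      rw [biprod.lift_eq]; simpa using ht)
    have hx1 := congrArg (· ≫ biprod.fst) hx
    have hx2 := congrArg (· ≫ biprod.snd) hx
    simp only [biprod.lift_fst, biprod.lift_snd, Category.assoc, Preadditive.comp_neg] at hx1 hx2
    obtain ⟨s, hs⟩ := h'.2 x (by simpa using hx2.symm)
    refine ⟨s, ?_⟩
    have := congrArg (· ≫ b) hs
    simp only [Category.assoc] at this ⊢
    rw [hx1, this]
  · have := congrArg (a ≫ ·) hq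
    have h1 := congrArg (· ≫ biprod.inl ≫ r) h.1
    simp only [Category.assoc, zero_comp] at this h1 ⊢
    rw [← this, h1]
  · intro T t ht
    obtain ⟨x, hx⟩ := e2 (biprod.lift 0 (t ≫ f ≫ d)) (by
      rw [biprod.lift_eq]; simpa using ht)
    have hx1 := congrArg (· ≫ biprod.fst) hx
    have hx2 := congrArg (· ≫ biprod.snd) hx
    simp only [biprod.lift_fst, biprod.lift_snd, Category.assoc, Preadditive.comp_neg] at hx1 hx2
    obtain ⟨s, hs⟩ := h.2 x hx1.symm
    refine ⟨-s, ?_⟩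
    have := congrArg (· ≫ d) hs
    simp only [Category.assoc] at this
    rw [hx2, this]
    simp

lemma RankFunction.Integral.nat {ρ : RankFunction C} (h : ρ.Integral) {X Y : C} (f : X ⟶ Y) :
    ∃ n : ℕ, ρ.rank f = n := by
  obtain ⟨n, hn⟩ := h f
  have h0 := ρ.nonneg f
  rw [hn] at h0
  lift n to ℕ using (by exact_mod_cast h0)
  exact ⟨n, by simpa using hn⟩

lemma Dec.exists {σ τ : RankFunction C} (hσ : σ.Integral) (hτ : τ.Integral) {X Y : C}
    (f : X ⟶ Y) : ∃ n : ℕ, (n : ℝ) = min (σ.rank f) (τ.rank f) ∧ Dec σ τ f n := by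
  obtain ⟨m, hm⟩ := hσ.nat f
  obtain ⟨n, hn⟩ := hτ.nat f
  have : ((min m n : ℕ) : ℝ) = min (σ.rank f) (τ.rank f) := by rw [hm, hn]; simp
  exact ⟨_, this, Dec.base f _ this⟩

lemma Dec.restrict {σ τ : RankFunction C} (hσ : σ.Integral) (hτ : τ.Integral) {X Y : C}
    {f : X ⟶ Y} {R : ℕ} (h : Dec σ τ f R) :
    ∀ ⦃X' Z : C⦄ (a : X' ⟶ X) (b : Y ⟶ Z), Ex f a b →
      ∃ r s, Dec σ τ (a ≫ f) r ∧ Dec σ τ (f ≫ b) s ∧ r + s ≤ R := by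
  induction h with
  | base f n hn =>
    intro X' Z a b hex
    obtain ⟨r, hr, hr'⟩ := Dec.exists hσ hτ (a ≫ f)
    obtain ⟨s, hs, hs'⟩ := Dec.exists hσ hτ (f ≫ b)
    refine ⟨r, s, hr', hs', ?_⟩
    have h1 := σ.isAdd f a b hex
    have h2 := τ.isAdd f a b hex
    have : (r : ℝ) + s ≤ n := by
      rw [hr, hs, hn, h1, h2]
      exact min_add_min_le_min_add_add
    exact_mod_cast this
  | step f c d g h m n hex' hg hh h1 h2 ih1 ih2 =>
    intro X' Z a b hex
    subst hg hh
    obtain ⟨P, Q, p, p', q, q', hp, hq, x1, x2, x3, x4⟩ := butterfly hex hex'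
    obtain ⟨r1, s1, y1, y2, y3⟩ := ih1 p' b x2
    obtain ⟨r2, s2, w1, w2, w3⟩ := ih2 a q' x4
    refine ⟨r1 + r2, s1 + s2, ?_, ?_, by omega⟩
    · exact Dec.step _ p d _ _ _ _ x1 hp.symm (by simp) y1 w1
    · exact Dec.step _ c q _ _ _ _ x3 (by simp) (by simpa using hq.symm) y2 w2

/-- the meet -/
noncomputable def meetNat (σ τ : RankFunction C) ⦃X Y : C⦄ (f : X ⟶ Y) : ℕ := sInf {n | Dec σ τ f n}

section Meet
variable {σ τ : RankFunction C}

lemma mt_mem (hσ : σ.Integral) (hτ : τ.Integral) {X Y : C} (f : X ⟶ Y) :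
    Dec σ τ f (meetNat σ τ f) := by
  obtain ⟨n, -, hn⟩ := Dec.exists hσ hτ f
  exact Nat.sInf_mem (s := {n | Dec σ τ f n}) ⟨n, hn⟩

lemma mt_le {X Y : C} {f : X ⟶ Y} {n : ℕ} (h : Dec σ τ f n) : meetNat σ τ f ≤ n :=
  Nat.sInf_le h

lemma mt_isAdd (hσ : σ.Integral) (hτ : τ.Integral) :
    IsAdd (fun ⦃X Y : C⦄ (f : X ⟶ Y) => (meetNat σ τ f : ℝ)) := by
  intro X' X Y Z f a b hex
  have h1 : meetNat σ τ f ≤ meetNat σ τ (a ≫ f) + meetNat σ τ (f ≫ b) :=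
    mt_le (Dec.step f a b _ _ _ _ hex rfl rfl (mt_mem hσ hτ _) (mt_mem hσ hτ _))
  obtain ⟨r, s, hr, hs, hrs⟩ := (mt_mem hσ hτ f).restrict hσ hτ a b hex
  have h2 := mt_le hr
  have h3 := mt_le hs
  have : meetNat σ τ f = meetNat σ τ (a ≫ f) + meetNat σ τ (f ≫ b) := by omega
  beta_reduce
  exact_mod_cast this

lemma Dec.shift {X Y : C} {f : X ⟶ Y} {R : ℕ} (h : Dec σ τ f R) :
    Dec σ τ ((shiftFunctor C (1:ℤ)).map f) R ∧ Dec σ τ ((shiftFunctor C (-1:ℤ)).map f) R := by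
  induction h with
  | base f n hn =>
    exact ⟨Dec.base _ _ (by rw [σ.shiftInv, τ.shiftInv, hn]),
      Dec.base _ _ (by rw [σ.shiftInv_neg, τ.shiftInv_neg, hn])⟩
  | step f c d g h m n hex' hg hh h1 h2 ih1 ih2 =>
    subst hg hh
    exact ⟨Dec.step _ _ _ _ _ _ _ (hex'.shift 1) (by simp) (by simp) ih1.1 ih2.1,
      Dec.step _ _ _ _ _ _ _ (hex'.shift (-1)) (by simp) (by simp) ih1.2 ih2.2⟩

lemma mt_shift (hσ : σ.Integral) (hτ : τ.Integral) {X Y : C} (f : X ⟶ Y) :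
    meetNat σ τ ((shiftFunctor C (1:ℤ)).map f) = meetNat σ τ f := by
  apply le_antisymm
  · exact mt_le (mt_mem hσ hτ f).shift.1
  · have h1 : ((meetNat σ τ _ : ℕ) : ℝ) = _ := ((mt_isAdd hσ hτ).unshift f).2
    have h2 := mt_le (mt_mem hσ hτ ((shiftFunctor C (1:ℤ)).map f)).shift.2
    have h1' := Nat.cast_injective h1
    omega

/-- the meet as a rank function -/
noncomputable def meet (hσ : σ.Integral) (hτ : τ.Integral) : RankFunction C :=
  RankFunction.ofAdd _ (mt_isAdd hσ hτ) (fun _ _ _ => Nat.cast_nonneg _)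
    (fun _ _ f => by rw [mt_shift hσ hτ f])

lemma meet_le (hσ : σ.Integral) (hτ : τ.Integral) {X Y : C} (f : X ⟶ Y) :
    (meet hσ hτ).rank f ≤ σ.rank f ∧ (meet hσ hτ).rank f ≤ τ.rank f := by
  obtain ⟨n, h1, h2⟩ := Dec.exists hσ hτ f
  have : (meet hσ hτ).rank f ≤ n := by
    change ((meetNat σ τ f : ℕ) : ℝ) ≤ n
    exact_mod_cast mt_le h2
  rw [h1] at this
  exact ⟨this.trans (min_le_left _ _), this.trans (min_le_right _ _)⟩

lemma meet_integral (hσ : σ.Integral) (hτ : τ.Integral) : (meet hσ hτ).Integral :=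
  fun _ _ f => ⟨(meetNat σ τ f : ℕ), by simp; rfl⟩

end Meet

namespace RankFunction

lemma ext_rank {ρ σ : RankFunction C} (h : ∀ ⦃X Y : C⦄ (f : X ⟶ Y), ρ.rank f = σ.rank f) :
    ρ = σ := by
  cases ρ; cases σ
  congr
  funext X Y f
  exact h f

/-- difference -/
def sub (ρ σ : RankFunction C) (h : ∀ ⦃X Y : C⦄ (f : X ⟶ Y), σ.rank f ≤ ρ.rank f) :
    RankFunction C where
  rank := fun _ _ f => ρ.rank f - σ.rank f
  nonneg := fun _ _ f => sub_nonneg.2 (h f)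
  additive := fun _ _ _ _ f g => by rw [ρ.additive, σ.additive]; ring
  rankNullity := fun T hT => by rw [← ρ.rankNullity T hT, ← σ.rankNullity T hT]; ring
  shiftInv := fun _ _ f => by rw [ρ.shiftInv, σ.shiftInv]

lemma Integral.sub {ρ σ : RankFunction C} (hρ : ρ.Integral) (hσ : σ.Integral)
    (h : ∀ ⦃X Y : C⦄ (f : X ⟶ Y), σ.rank f ≤ ρ.rank f) : (ρ.sub σ h).Integral := by
  intro X Y f
  obtain ⟨m, hm⟩ := hρ f
  obtain ⟨n, hn⟩ := hσ f
  exact ⟨m - n, by simp [RankFunction.sub, hm, hn]⟩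

lemma Irreducible.le_cases {ρ σ : RankFunction C} (hρ : ρ.Irreducible) (hσ : σ.Integral)
    (h : ∀ ⦃X Y : C⦄ (f : X ⟶ Y), σ.rank f ≤ ρ.rank f) :
    (∀ ⦃X Y : C⦄ (f : X ⟶ Y), σ.rank f = 0) ∨ σ = ρ := by
  by_contra hcon
  push Not at hcon
  obtain ⟨⟨X, Y, f, hf⟩, hne⟩ := hcon
  refine hρ.2.2 ⟨σ, ρ.sub σ h, hσ, hρ.1.sub hσ h, ⟨X, Y, f, hf⟩, ?_, ?_⟩
  · by_contra hz
    apply hne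
    apply ext_rank
    intro X Y f
    by_contra hf
    exact hz ⟨X, Y, f, fun h0 => hf (by simp only [RankFunction.sub] at h0; linarith)⟩
  · intro X Y f
    simp [RankFunction.sub]

lemma Irreducible.dec_zero {σ τ : RankFunction C} (hσ : σ.Irreducible) (hτ : τ.Irreducible)
    (hne : τ ≠ σ) {X Y : C} (f : X ⟶ Y) : Dec σ τ f 0 := by
  have hi := meet_integral hσ.1 hτ.1
  have h1 := hσ.le_cases hi (fun _ _ f => (meet_le hσ.1 hτ.1 f).1)
  have h2 := hτ.le_cases hi (fun _ _ f => (meet_le hσ.1 hτ.1 f).2)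
  have key : ∀ ⦃X Y : C⦄ (f : X ⟶ Y), (meet hσ.1 hτ.1).rank f = 0 := by
    rcases h1 with h1 | h1
    · exact h1
    · rcases h2 with h2 | h2
      · exact h2
      · exact absurd (h2.symm.trans h1) hne
  have h3 : ((meetNat σ τ f : ℕ) : ℝ) = 0 := key f
  have h4 : meetNat σ τ f = 0 := by exact_mod_cast h3
  have := mt_mem hσ.1 hτ.1 f
  rwa [h4] at this

lemma dec_bound {σ τ : RankFunction C} {κ : ∀ ⦃X Y : C⦄, (X ⟶ Y) → ℝ} (hκ : IsAdd κ)
    (h0 : ∀ ⦃X Y : C⦄ (f : X ⟶ Y), 0 ≤ κ f) (k n : ℕ)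
    (hle : ∀ ⦃X Y : C⦄ (f : X ⟶ Y), k * σ.rank f ≤ κ f + n * τ.rank f)
    {X Y : C} {f : X ⟶ Y} {R : ℕ} (h : Dec σ τ f R) :
    k * σ.rank f ≤ κ f + (k + n) * R := by
  induction h with
  | base f m hm =>
    rw [hm]
    have h1 := h0 f
    have h2 := hle f
    have h3 := σ.nonneg f
    have h4 := τ.nonneg f
    rcases min_cases (σ.rank f) (τ.rank f) with ⟨h, -⟩ | ⟨h, -⟩ <;> rw [h]
    · have : 0 ≤ n * σ.rank f := by positivity
      nlinarith
    · have : 0 ≤ k * τ.rank f := by positivity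
      nlinarith
  | step f c d g h m n hex' hg hh h1 h2 ih1 ih2 =>
    subst hg hh
    rw [σ.isAdd f c d hex', hκ f c d hex']
    push_cast
    linarith

lemma Irreducible.add_sum_le {σ : RankFunction C} (hσ : σ.Irreducible) (ρ : RankFunction C)
    {ι : Type*} (τ : ι → RankFunction C) (n : ι → ℕ) (k : ℕ) (s : Finset ι)
    (hτ : ∀ i ∈ s, n i = 0 ∨ ((τ i).Irreducible ∧ τ i ≠ σ))
    (hk : ∀ ⦃X Y : C⦄ (f : X ⟶ Y), k * σ.rank f ≤ ρ.rank f)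
    (hs : ∀ ⦃X Y : C⦄ (f : X ⟶ Y), ∑ i ∈ s, n i * (τ i).rank f ≤ ρ.rank f) :
    ∀ ⦃X Y : C⦄ (f : X ⟶ Y), k * σ.rank f + ∑ i ∈ s, n i * (τ i).rank f ≤ ρ.rank f := by
  classical
  induction s using Finset.induction_on with
  | empty => simpa using hk
  | insert i s hi ih =>
    simp only [Finset.sum_insert hi] at hs ⊢
    have ih := ih (fun j hj => hτ j (Finset.mem_insert_of_mem hj)) (fun X Y f => by
      have h1 := hs f
      have h2 := (τ i).nonneg f
      have : 0 ≤ n i * (τ i).rank f := by positivity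
      linarith)
    rcases hτ i (Finset.mem_insert_self _ _) with h | ⟨h1, h2⟩
    · simpa [h] using ih
    · intro X Y f
      have hκ : IsAdd (fun ⦃X Y : C⦄ (f : X ⟶ Y) => ρ.rank f -
          (n i * (τ i).rank f + ∑ i ∈ s, n i * (τ i).rank f)) := by
        intro X' X Y Z f a b hex
        simp only
        rw [ρ.isAdd f a b hex, (τ i).isAdd f a b hex,
          Finset.sum_congr rfl (fun j _ => by rw [(τ j).isAdd f a b hex, mul_add]),
          Finset.sum_add_distrib]
        ring
      have := dec_bound hκ (fun X Y f => by have := hs f; linarith) k (n i)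
        (fun X Y f => by have := ih f; linarith) (hσ.dec_zero h1 h2 f)
      simp only [Nat.cast_zero, mul_zero, add_zero] at this
      linarith

end RankFunction

namespace RankFunction

/-- pointwise order -/
def Le (σ τ : RankFunction C) : Prop := ∀ ⦃X Y : C⦄ (f : X ⟶ Y), σ.rank f ≤ τ.rank f

lemma Le.refl (σ : RankFunction C) : Le σ σ := fun _ _ _ => le_rfl

lemma Le.trans {σ τ κ : RankFunction C} (h : Le σ τ) (h' : Le τ κ) : Le σ κ :=
  fun _ _ f => (h f).trans (h' f)

lemma chain_inf (c : Set (RankFunction C)) (hne : c.Nonempty) (hint : ∀ σ ∈ c, σ.Integral)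
    (hc : IsChain (fun a b => Le b a) c) :
    ∃ κ : RankFunction C, (∀ σ ∈ c, Le κ σ) ∧
      ∀ ⦃X Y : C⦄ (f : X ⟶ Y), ∃ σ ∈ c, κ.rank f = σ.rank f := by
  have hmin : ∀ ⦃X Y : C⦄ (f : X ⟶ Y), ∃ σ ∈ c, ∀ τ ∈ c, σ.rank f ≤ τ.rank f := by
    intro X Y f
    obtain ⟨σ0, h0⟩ := hne
    let S : Set ℕ := {n | ∃ σ ∈ c, σ.rank f = n}
    have hS : S.Nonempty := by
      obtain ⟨n, hn⟩ := (hint σ0 h0).nat f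
      exact ⟨n, σ0, h0, hn⟩
    obtain ⟨σ, hσ, hv⟩ := Nat.sInf_mem hS
    refine ⟨σ, hσ, fun τ hτ => ?_⟩
    obtain ⟨m, hm⟩ := (hint τ hτ).nat f
    rw [hv, hm]
    exact_mod_cast Nat.sInf_le (s := S) ⟨τ, hτ, hm⟩
  choose w hw hwm using hmin
  have two : ∀ σ ∈ c, ∀ τ ∈ c, ∃ κ ∈ c, Le κ σ ∧ Le κ τ := by
    intro σ hσ τ hτ
    by_cases h : σ = τ
    · subst h; exact ⟨σ, hσ, Le.refl _, Le.refl _⟩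
    · rcases hc hσ hτ h with h | h
      · exact ⟨τ, hτ, h, Le.refl _⟩
      · exact ⟨σ, hσ, Le.refl _, h⟩
  have att : ∀ ⦃X Y : C⦄ (f : X ⟶ Y) (κ), κ ∈ c → Le κ (w f) → (w f).rank f = κ.rank f :=
    fun X Y f κ hκ h => le_antisymm (hwm f κ hκ) (h f)
  have three : ∀ ⦃X Y X' Y' X'' Y'' : C⦄ (f : X ⟶ Y) (f' : X' ⟶ Y') (f'' : X'' ⟶ Y''),
      ∃ κ : RankFunction C, (w f).rank f = κ.rank f ∧ (w f').rank f' = κ.rank f' ∧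
        (w f'').rank f'' = κ.rank f'' := by
    intro X Y X' Y' X'' Y'' f f' f''
    obtain ⟨κ, hκ, h1, h2⟩ := two _ (hw f) _ (hw f')
    obtain ⟨κ', hκ', h3, h4⟩ := two _ hκ _ (hw f'')
    exact ⟨κ', att _ _ hκ' (h3.trans h1), att _ _ hκ' (h3.trans h2), att _ _ hκ' h4⟩
  refine ⟨⟨fun X Y f => (w f).rank f, fun X Y f => (w f).nonneg f, ?_, ?_, ?_⟩, ?_, ?_⟩
  · intro X₁ Y₁ X₂ Y₂ f g
    obtain ⟨κ, h1, h2, h3⟩ := three (biprod.map f g) f g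
    rw [h1, h2, h3, κ.additive]
  · intro T hT
    obtain ⟨κ, h1, h2, h3⟩ := three T.mor₁ T.mor₂ (𝟙 T.obj₂)
    rw [h1, h2, h3, κ.rankNullity T hT]
  · intro X Y f
    obtain ⟨κ, h1, h2, h3⟩ := three ((shiftFunctor C (1:ℤ)).map f) f f
    rw [h1, h2, κ.shiftInv]
  · intro σ hσ X Y f
    exact hwm f σ hσ
  · intro X Y f
    exact ⟨w f, hw f, rfl⟩

lemma exists_irred_le {ρ : RankFunction C} (hρ : ρ.Integral) (hnz : ρ.Nonzero) :
    ∃ σ : RankFunction C, σ.Irreducible ∧ Le σ ρ := by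
  obtain ⟨X, Y, f, hf⟩ := hnz
  let S : Set ℕ := {n | n ≠ 0 ∧ ∃ σ : RankFunction C, σ.Integral ∧ Le σ ρ ∧ σ.rank f = n}
  have hS : S.Nonempty := by
    obtain ⟨n, hn⟩ := hρ.nat f
    refine ⟨n, ?_, ρ, hρ, Le.refl _, hn⟩
    rintro rfl
    exact hf (by simpa using hn)
  obtain ⟨n0, σ0, hσ0, hle0, hv0⟩ := Nat.sInf_mem hS
  have hminS : ∀ σ : RankFunction C, σ.Integral → Le σ ρ → σ.rank f ≠ 0 →
      (sInf S : ℕ) ≤ σ.rank f := by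
    intro σ h1 h2 h3
    obtain ⟨m, hm⟩ := h1.nat f
    rw [hm]
    have : m ∈ S := ⟨by rintro rfl; exact h3 (by simpa using hm), σ, h1, h2, hm⟩
    exact_mod_cast Nat.sInf_le this
  generalize sInf S = n at n0 hv0 hminS
  have hnpos : (0 : ℝ) < n := by exact_mod_cast Nat.pos_of_ne_zero n0
  let A := {σ : RankFunction C // σ.Integral ∧ Le σ ρ ∧ σ.rank f = n}
  obtain ⟨⟨σ, hσ, hle, hv⟩, hmax⟩ := exists_maximal_of_chains_bounded
    (r := fun a b : A => Le b.1 a.1) (by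
      intro c hc
      rcases c.eq_empty_or_nonempty with rfl | hne
      · exact ⟨⟨σ0, hσ0, hle0, hv0⟩, by simp⟩
      · obtain ⟨κ, h1, h2⟩ := chain_inf (Subtype.val '' c) (hne.image _)
          (by rintro _ ⟨a, -, rfl⟩; exact a.2.1)
          (by
            rintro _ ⟨a, ha, rfl⟩ _ ⟨b, hb, rfl⟩ hab
            exact hc ha hb (fun h => hab (by rw [h])))
        refine ⟨⟨κ, ?_, ?_, ?_⟩, fun a ha => h1 _ ⟨a, ha, rfl⟩⟩
        · intro X Y g
          obtain ⟨_, ⟨a, ha, rfl⟩, h⟩ := h2 g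
          rw [h]; exact a.2.1 g
        · obtain ⟨a, ha⟩ := hne
          exact (h1 _ ⟨a, ha, rfl⟩).trans a.2.2.1
        · obtain ⟨_, ⟨a, ha, rfl⟩, h⟩ := h2 f
          rw [h, a.2.2.2])
    (fun {a b c} hab hbc => Le.trans hbc hab)
  refine ⟨σ, ⟨hσ, ⟨X, Y, f, by rw [hv]; exact hnpos.ne'⟩, ?_⟩, hle⟩
  rintro ⟨σ₁, σ₂, i1, i2, nz1, nz2, hsum⟩
  have main : ∀ σ₁ σ₂ : RankFunction C, σ₁.Integral → σ₂.Integral → σ₂.Nonzero →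
      (∀ ⦃X Y : C⦄ (f : X ⟶ Y), σ.rank f = σ₁.rank f + σ₂.rank f) → σ₁.rank f ≠ 0 → False := by
    intro σ₁ σ₂ i1 i2 nz2 hsum hne
    have l1 : Le σ₁ σ := fun X Y g => by rw [hsum g]; linarith [σ₂.nonneg g]
    have h1 := hminS σ₁ i1 (l1.trans hle) hne
    have h2 := l1 f
    rw [hv] at h2
    have h3 := hmax ⟨σ₁, i1, l1.trans hle, le_antisymm h2 h1⟩ l1
    obtain ⟨X', Y', g, hg⟩ := nz2
    have h4 : σ.rank g ≤ σ₁.rank g := h3 g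
    have h5 := hsum g
    have h6 := σ₂.nonneg g
    exact hg (by linarith)
  by_cases h : σ₁.rank f = 0
  · refine main σ₂ σ₁ i2 i1 nz1 (fun X Y g => by rw [hsum g, add_comm]) ?_
    have := hsum f
    rw [hv] at this
    intro h'
    linarith
  · exact main σ₁ σ₂ i1 i2 nz2 hsum h

open Classical in
/-- multiplicity -/
noncomputable def mult (ρ σ : RankFunction C) : ℕ :=
  if σ.Irreducible then sSup {k : ℕ | ∀ ⦃X Y : C⦄ (f : X ⟶ Y), k * σ.rank f ≤ ρ.rank f} else 0

lemma one_le_of_ne {σ : RankFunction C} (h : σ.Integral) {X Y : C} {f : X ⟶ Y}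
    (hf : σ.rank f ≠ 0) : 1 ≤ σ.rank f := by
  obtain ⟨n, hn⟩ := h.nat f
  rw [hn] at hf ⊢
  have : n ≠ 0 := by exact_mod_cast hf
  exact_mod_cast Nat.one_le_iff_ne_zero.2 this

lemma mult_bdd (ρ : RankFunction C) {σ : RankFunction C} (hσ : σ.Irreducible) :
    BddAbove {k : ℕ | ∀ ⦃X Y : C⦄ (f : X ⟶ Y), k * σ.rank f ≤ ρ.rank f} := by
  obtain ⟨X, Y, f, hf⟩ := hσ.2.1
  have h1 := one_le_of_ne hσ.1 hf
  refine ⟨⌈ρ.rank f⌉₊, fun k hk => ?_⟩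
  have h2 := hk f
  have h3 := Nat.le_ceil (ρ.rank f)
  have h4 : (k : ℝ) ≤ k * σ.rank f := le_mul_of_one_le_right (Nat.cast_nonneg _) h1
  exact_mod_cast h4.trans (h2.trans h3)

lemma mult_spec (ρ σ : RankFunction C) ⦃X Y : C⦄ (f : X ⟶ Y) :
    mult ρ σ * σ.rank f ≤ ρ.rank f := by
  unfold mult
  split_ifs with h
  · exact Nat.sSup_mem (s := {k : ℕ | ∀ ⦃X Y : C⦄ (f : X ⟶ Y), k * σ.rank f ≤ ρ.rank f})
      ⟨0, fun X Y f => by simpa using ρ.nonneg f⟩ (mult_bdd ρ h) f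
  · simpa using ρ.nonneg f

lemma le_mult {ρ σ : RankFunction C} (hσ : σ.Irreducible) {k : ℕ}
    (hk : ∀ ⦃X Y : C⦄ (f : X ⟶ Y), k * σ.rank f ≤ ρ.rank f) : k ≤ mult ρ σ := by
  unfold mult
  rw [if_pos hσ]
  exact le_csSup (mult_bdd ρ hσ) hk

lemma irred_of_mult {ρ σ : RankFunction C} (h : mult ρ σ ≠ 0) : σ.Irreducible := by
  unfold mult at h
  by_contra hn
  exact h (if_neg hn)

lemma sum_mult_le (ρ : RankFunction C) (s : Finset (RankFunction C)) :
    ∀ ⦃X Y : C⦄ (f : X ⟶ Y), ∑ σ ∈ s, mult ρ σ * σ.rank f ≤ ρ.rank f := by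
  classical
  induction s using Finset.induction_on with
  | empty => intro X Y f; simpa using ρ.nonneg f
  | insert σ s hσ ih =>
    by_cases h : mult ρ σ = 0
    · simpa [Finset.sum_insert hσ, h] using ih
    · simp only [Finset.sum_insert hσ]
      refine (irred_of_mult h).add_sum_le ρ id (mult ρ) _ s ?_ (mult_spec ρ σ) ih
      intro τ hτ
      by_cases h' : mult ρ τ = 0
      · exact Or.inl h'
      · exact Or.inr ⟨irred_of_mult h', fun h => hσ (h ▸ hτ)⟩

/-- index type -/
def Idx (ρ : RankFunction C) : Type (max u v) := Σ σ : RankFunction C, Fin (mult ρ σ)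

/-- the family -/
def fam (ρ : RankFunction C) (x : Idx ρ) : RankFunction C := x.1

lemma fam_irred (ρ : RankFunction C) (x : Idx ρ) : (fam ρ x).Irreducible := by
  obtain ⟨σ, i⟩ := x
  exact irred_of_mult (ρ := ρ) (σ := σ) (fun h => by rw [h] at i; exact i.elim0)

lemma fam_sum_le (ρ : RankFunction C) (T : Finset (Idx ρ)) {X Y : C} (f : X ⟶ Y) :
    ∑ x ∈ T, (fam ρ x).rank f ≤ ρ.rank f := by
  classical
  have h1 : T ⊆ ((T.image (fun x => (x.1 : RankFunction C))).sigma
      (fun σ => (Finset.univ : Finset (Fin (mult ρ σ)))) : Finset (Idx ρ)) := by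
    intro x hx
    exact Finset.mem_sigma.2 ⟨Finset.mem_image_of_mem _ hx, Finset.mem_univ _⟩
  refine (Finset.sum_le_sum_of_subset_of_nonneg h1 (fun x _ _ => (fam ρ x).nonneg f)).trans ?_
  have h2 := sum_mult_le ρ (T.image (fun x => (x.1 : RankFunction C))) f
  refine le_trans (le_of_eq ?_) h2
  refine (Finset.sum_sigma _ _ _).trans ?_
  refine Finset.sum_congr rfl (fun σ _ => ?_)
  simp [fam]

lemma fam_finite (ρ : RankFunction C) {X Y : C} (f : X ⟶ Y) :
    {x | (fam ρ x).rank f ≠ 0}.Finite := by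
  by_contra hinf
  obtain ⟨T, hT, hcard⟩ := Set.Infinite.exists_subset_card_eq hinf (⌈ρ.rank f⌉₊ + 1)
  have h1 := fam_sum_le ρ T f
  have h2 : (T.card : ℝ) ≤ ∑ x ∈ T, (fam ρ x).rank f := by
    have := Finset.card_nsmul_le_sum T (fun x => (fam ρ x).rank f) 1
      (fun x hx => one_le_of_ne (fam_irred ρ x).1 (hT hx))
    simpa using this
  rw [hcard] at h2
  push_cast at h2
  linarith [Nat.le_ceil (ρ.rank f)]

lemma finsum_eq_aux {I : Type*} {g : I → ℝ} (h : {i | g i ≠ 0}.Finite) :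
    ∑ᶠ i, g i = ∑ i ∈ h.toFinset, g i := finsum_eq_sum _ h

lemma sum_le_finsum_aux {I : Type*} {g : I → ℝ} (h : {i | g i ≠ 0}.Finite)
    (h0 : ∀ i, 0 ≤ g i) (s : Finset I) : ∑ i ∈ s, g i ≤ ∑ᶠ i, g i := by
  classical
  rw [finsum_eq_aux h, ← Finset.sum_filter_ne_zero]
  refine Finset.sum_le_sum_of_subset_of_nonneg (fun i hi => ?_) (fun i _ _ => h0 i)
  exact (Set.Finite.mem_toFinset _).2 (Finset.mem_filter.1 hi).2

/-- sum of a locally finite family -/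
noncomputable def lsum {I : Type*} (g : I → RankFunction C)
    (hfin : ∀ ⦃X Y : C⦄ (f : X ⟶ Y), {i | (g i).rank f ≠ 0}.Finite) : RankFunction C where
  rank := fun _ _ f => ∑ᶠ i, (g i).rank f
  nonneg := fun _ _ f => finsum_nonneg (fun i => (g i).nonneg f)
  additive := fun _ _ _ _ f f' => by
    rw [← finsum_add_distrib (hfin f) (hfin f')]
    exact finsum_congr (fun i => (g i).additive f f')
  rankNullity := fun T hT => by
    rw [← finsum_add_distrib (hfin _) (hfin _)]
    exact finsum_congr (fun i => (g i).rankNullity T hT)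
  shiftInv := fun _ _ f => finsum_congr (fun i => (g i).shiftInv f)

lemma lsum_integral {I : Type*} (g : I → RankFunction C)
    (hfin : ∀ ⦃X Y : C⦄ (f : X ⟶ Y), {i | (g i).rank f ≠ 0}.Finite)
    (hg : ∀ i, (g i).Integral) : (lsum g hfin).Integral := by
  intro X Y f
  choose n hn using fun i => hg i f
  refine ⟨∑ i ∈ (hfin f).toFinset, n i, ?_⟩
  change ∑ᶠ i, (g i).rank f = _
  rw [finsum_eq_sum _ (hfin f)]
  push_cast
  exact Finset.sum_congr rfl (fun i _ => hn i)

lemma fam_isDecomposition {ρ : RankFunction C} (hρ : ρ.Integral) :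
    ρ.IsDecomposition (fam ρ) := by
  have hfin : ∀ ⦃X Y : C⦄ (f : X ⟶ Y), {i | (fam ρ i).rank f ≠ 0}.Finite :=
    fun X Y f => fam_finite ρ f
  refine ⟨fam_irred ρ, hfin, ?_⟩
  have hle : Le (lsum (fam ρ) hfin) ρ := fun X Y f => by
    change ∑ᶠ i, (fam ρ i).rank f ≤ _
    rw [finsum_eq_sum _ (hfin f)]
    exact fam_sum_le ρ _ f
  have hrem := hρ.sub (lsum_integral _ hfin (fun i => (fam_irred ρ i).1)) hle
  by_contra hne
  push Not at hne
  obtain ⟨X, Y, f, hf⟩ := hne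
  obtain ⟨τ, hτ, hτle⟩ := exists_irred_le hrem ⟨X, Y, f, sub_ne_zero.2 hf⟩
  have hbound : ∀ ⦃X Y : C⦄ (f : X ⟶ Y), mult ρ τ * τ.rank f ≤ ∑ᶠ i, (fam ρ i).rank f := by
    intro X Y f
    classical
    let T : Finset (Idx ρ) := Finset.univ.map
      ⟨fun i : Fin (mult ρ τ) => (⟨τ, i⟩ : Σ σ : RankFunction C, Fin (mult ρ σ)),
        fun i j h => eq_of_heq (Sigma.mk.inj h).2⟩
    have h1 : ∑ x ∈ T, (fam ρ x).rank f = mult ρ τ * τ.rank f := by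
      refine (Finset.sum_map _ _ _).trans ?_
      change ∑ i : Fin (mult ρ τ), τ.rank f = _
      simp
    rw [← h1]
    exact sum_le_finsum_aux (hfin f) (fun i => (fam ρ i).nonneg f) T
  have : mult ρ τ + 1 ≤ mult ρ τ := le_mult hτ (fun X Y g => by
    have h1 : τ.rank g ≤ ρ.rank g - ∑ᶠ i, (fam ρ i).rank g := hτle g
    have h2 := hbound g
    push_cast
    linarith)
  omega

lemma fiber_card {ρ : RankFunction C} {J : Type (max u v)} {gam : J → RankFunction C}
    (h : ρ.IsDecomposition gam) (σ : RankFunction C) :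
    Finite {j // gam j = σ} ∧ Nat.card {j // gam j = σ} = mult ρ σ := by
  classical
  obtain ⟨hirr, hfin, hsum⟩ := h
  by_cases hσ : σ.Irreducible
  · obtain ⟨X, Y, f, hf⟩ := hσ.2.1
    have hF : {j | gam j = σ}.Finite := (hfin f).subset (fun j hj => by
      simp only [Set.mem_ofPred_eq] at hj ⊢
      rwa [hj])
    have hfi : Finite {j // gam j = σ} := hF
    refine ⟨hfi, ?_⟩
    have hcard : Nat.card {j // gam j = σ} = hF.toFinset.card :=
      Nat.card_eq_card_finite_toFinset hF
    rw [hcard]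
    have hpart : ∀ (s : Finset J) ⦃X Y : C⦄ (f : X ⟶ Y), ∑ j ∈ s, (gam j).rank f ≤ ρ.rank f := by
      intro s X Y f
      rw [hsum f]
      exact sum_le_finsum_aux (hfin f) (fun i => (gam i).nonneg f) s
    have hFs : ∀ ⦃X Y : C⦄ (f : X ⟶ Y),
        ∑ j ∈ hF.toFinset, (gam j).rank f = hF.toFinset.card * σ.rank f := by
      intro X Y f
      rw [Finset.sum_congr rfl (g := fun _ => σ.rank f) (fun j hj => by
        rw [(Set.Finite.mem_toFinset hF).1 hj])]
      simp
    apply le_antisymm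
    · exact le_mult hσ (fun X Y g => by rw [← hFs g]; exact hpart _ g)
    · let s : Finset J := (hfin f).toFinset.filter (fun j => gam j ≠ σ)
      have h1 := hσ.add_sum_le ρ gam (fun _ => 1) (mult ρ σ) s
        (fun j hj => Or.inr ⟨hirr j, (Finset.mem_filter.1 hj).2⟩) (mult_spec ρ σ)
        (fun X Y g => by simpa using hpart s g) f
      have h2 : ρ.rank f = hF.toFinset.card * σ.rank f + ∑ j ∈ s, (gam j).rank f := by
        rw [hsum f, finsum_eq_aux (hfin f), ← hFs f,
          ← Finset.sum_filter_add_sum_filter_not (hfin f).toFinset (fun j => gam j = σ)]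
        congr 1
        refine Finset.sum_congr ?_ (fun _ _ => rfl)
        ext j
        simp only [Finset.mem_filter, Set.Finite.mem_toFinset, Set.mem_ofPred_eq]
        exact ⟨fun h => h.2, fun h => ⟨by rwa [h], h⟩⟩
      rw [h2] at h1
      simp only [Nat.cast_one, one_mul] at h1
      have h3 : (mult ρ σ : ℝ) * σ.rank f ≤ hF.toFinset.card * σ.rank f := by linarith
      have h4 := one_le_of_ne hσ.1 hf
      exact_mod_cast le_of_mul_le_mul_right h3 (by linarith)
  · have hE : IsEmpty {j // gam j = σ} := ⟨fun j => hσ (j.2 ▸ hirr j.1)⟩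
    refine ⟨inferInstance, ?_⟩
    rw [Nat.card_of_isEmpty]
    by_contra h
    exact hσ (irred_of_mult (ρ := ρ) (fun h' => h h'.symm))

lemma unique_decomposition {ρ : RankFunction C} {J : Type (max u v)} {gam : J → RankFunction C}
    (h : ρ.IsDecomposition gam) : ∃ e : J ≃ Idx ρ, ∀ j, fam ρ (e j) = gam j := by
  have eq : ∀ σ, Nonempty ({j // gam j = σ} ≃ Fin (mult ρ σ)) := fun σ => by
    obtain ⟨h1, h2⟩ := fiber_card h σ
    exact ⟨Finite.equivFinOfCardEq h2⟩
  let E := fun σ => (eq σ).some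
  exact ⟨(Equiv.sigmaFiberEquiv gam).symm.trans (Equiv.sigmaCongrRight E), fun j => rfl⟩

end RankFunction

end Helpers

theorem integral_rankFunction_unique_decomposition
    (ρ : RankFunction C) (hint : ρ.Integral) :
    ∃ (I : Type (max u v)) (fam : I → RankFunction C),
      ρ.IsDecomposition fam ∧
      ∀ (J : Type (max u v)) (gam : J → RankFunction C),
        ρ.IsDecomposition gam → ∃ e : J ≃ I, ∀ j, fam (e j) = gam j := by
  exact ⟨RankFunction.Idx ρ, RankFunction.fam ρ, RankFunction.fam_isDecomposition hint,
    fun _ _ h => RankFunction.unique_decomposition h⟩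
end

section
/- Let ρ be a rank function on a skeletally small triangulated category C. Then Ker ρ = {f : ρ(f)=0} is a Σ-closed additive ideal of C; moreover, it is a cohomological ideal, since Ker ρ equals the annihilator of the cohomological functor given by composing the Yoneda embedding C → mod C with the Serre localisation of mod C at Ker ρ̃. -/
/-!
Statement 12: For a rank function `ρ` on a skeletally small triangulated category `C`, the
kernel on morphisms `Ker ρ = {f : ρ(f) = 0}` is a Σ-closed additive ideal of `C`, and it is
a cohomological ideal: it is the annihilator of a cohomological functor from `C` to an
abelian category (namely the composite of the Yoneda embedding into `mod C` with the Serre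
localisation of `mod C` at `Ker ρ̃`).
-/

open CategoryTheory CategoryTheory.Limits CategoryTheory.Pretriangulated

universe v u

variable (C : Type u) [Category.{v} C] [Preadditive C] [HasZeroObject C] [HasShift C ℤ]
  [∀ n : ℤ, (shiftFunctor C n).Additive] [Pretriangulated C] [HasBinaryBiproducts C]
  [EssentiallySmall.{v} C]

/-- A cohomological functor from `C` to some abelian category: it sends distinguished
triangles to exact sequences. -/
structure CohomFunctorTo where
  A : Type (max u (v + 1))
  [cat : Category.{max u v} A]
  [ab : Abelian A]
  H : C ⥤ A
  cohomological : ∀ (T : Triangle C), (T ∈ distTriang C) →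
    ∃ w : H.map T.mor₁ ≫ H.map T.mor₂ = 0, (ShortComplex.mk _ _ w).Exact

attribute [instance] CohomFunctorTo.cat CohomFunctorTo.ab

variable {C}

namespace RankFunction

open scoped ZeroObject

section tri

variable {X Y Z : C} {f : X ⟶ Y} {g : Y ⟶ Z} {h : Z ⟶ X⟦(1 : ℤ)⟧}

lemma t_w12 (hT : Triangle.mk f g h ∈ distTriang C) : f ≫ g = 0 :=
  comp_distTriang_mor_zero₁₂ _ hT

lemma t_w23 (hT : Triangle.mk f g h ∈ distTriang C) : g ≫ h = 0 :=
  comp_distTriang_mor_zero₂₃ _ hT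

lemma t_rot (hT : Triangle.mk f g h ∈ distTriang C) :
    Triangle.mk g h (-f⟦(1 : ℤ)⟧') ∈ distTriang C :=
  rot_of_distTriang _ hT

lemma t_y2 (hT : Triangle.mk f g h ∈ distTriang C) {W : C} (u : Y ⟶ W) (hu : f ≫ u = 0) :
    ∃ v : Z ⟶ W, u = g ≫ v := Triangle.yoneda_exact₂ _ hT u hu

lemma t_c2 (hT : Triangle.mk f g h ∈ distTriang C) {W : C} (u : W ⟶ Y) (hu : u ≫ g = 0) :
    ∃ v : W ⟶ X, u = v ≫ f := Triangle.coyoneda_exact₂ _ hT u hu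

lemma t_c3 (hT : Triangle.mk f g h ∈ distTriang C) {W : C} (u : W ⟶ Z) (hu : u ≫ h = 0) :
    ∃ v : W ⟶ Y, u = v ≫ g := Triangle.coyoneda_exact₃ _ hT u hu

lemma t_c1 (hT : Triangle.mk f g h ∈ distTriang C) {W : C} (u : W ⟶ X⟦(1 : ℤ)⟧)
    (hu : u ≫ f⟦(1 : ℤ)⟧' = 0) :
    ∃ v : W ⟶ Z, u = v ≫ h := Triangle.coyoneda_exact₁ _ hT u hu

lemma t_iso (hT : Triangle.mk f g h ∈ distTriang C) {X' Y' : C} (i : X' ≅ X) (j : Y' ≅ Y)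
    (f' : X' ⟶ Y') (g' : Y' ⟶ Z) (h' : Z ⟶ X'⟦(1 : ℤ)⟧)
    (e1 : f' ≫ j.hom = i.hom ≫ f) (e2 : g' = j.hom ≫ g) (e3 : h' ≫ i.hom⟦(1 : ℤ)⟧' = h) :
    Triangle.mk f' g' h' ∈ distTriang C :=
  isomorphic_distinguished _ hT _ (Triangle.isoMk _ _ i j (Iso.refl Z) e1
    ((Category.comp_id g').trans e2) (e3.trans (Category.id_comp h).symm))

lemma t_fill (hT : Triangle.mk f g h ∈ distTriang C)
    {X' Y' Z' : C} {f' : X' ⟶ Y'} {g' : Y' ⟶ Z'} {h' : Z' ⟶ X'⟦(1 : ℤ)⟧}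
    (hT' : Triangle.mk f' g' h' ∈ distTriang C) (a : X ⟶ X') (b : Y ⟶ Y')
    (e : f ≫ b = a ≫ f') : ∃ t : Z ⟶ Z', g ≫ t = b ≫ g' ∧ h ≫ a⟦(1 : ℤ)⟧' = t ≫ h' :=
  complete_distinguished_triangle_morphism _ _ hT hT' a b e

lemma t_of_isIso₁ (hZ : IsZero Z) (hf : IsIso f) : Triangle.mk f g h ∈ distTriang C :=
  (Triangle.distinguished_iff_of_isZero₃ _ hZ).2 hf

lemma t_of_isIso₂ (hX : IsZero X) (hg : IsIso g) : Triangle.mk f g h ∈ distTriang C :=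
  (Triangle.distinguished_iff_of_isZero₁ _ hX).2 hg

lemma t_fiber (g : Y ⟶ Z) : ∃ (X : C) (f : X ⟶ Y) (h : Z ⟶ X⟦(1 : ℤ)⟧),
    Triangle.mk f g h ∈ distTriang C := distinguished_cocone_triangle₁ g

lemma t_cone (f : X ⟶ Y) : ∃ (Z : C) (g : Y ⟶ Z) (h : Z ⟶ X⟦(1 : ℤ)⟧),
    Triangle.mk f g h ∈ distTriang C := distinguished_cocone_triangle f

lemma rk1 (ρ : RankFunction C) (hT : Triangle.mk f g h ∈ distTriang C) :
    ρ.rank f + ρ.rank g = ρ.rank (𝟙 Y) := ρ.rankNullity _ hT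

end tri

variable (ρ : RankFunction C)

lemma rk_id_zero {X Z : C} (hZ : IsZero Z) (f : X ⟶ Z) : ρ.rank f = 0 := by
  have h := ρ.rk1 (t_of_isIso₁ (f := 𝟙 X) (g := f) (h := 0) hZ inferInstance)
  linarith

lemma rk_from_zero {X Z : C} (hZ : IsZero Z) (f : Z ⟶ X) : ρ.rank f = 0 := by
  have h := ρ.rk1 (t_of_isIso₂ (f := f) (g := 𝟙 X) (h := 0) hZ inferInstance)
  linarith

lemma rk_id_shift (X : C) : ρ.rank (𝟙 (X⟦(1 : ℤ)⟧)) = ρ.rank (𝟙 X) := by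
  rw [← ρ.shiftInv (𝟙 X), CategoryTheory.Functor.map_id]

lemma rk_comp_iso_left {W X Y : C} (i : W ≅ X) (f : X ⟶ Y) :
    ρ.rank (i.hom ≫ f) = ρ.rank f := by
  obtain ⟨Z, g, h, hT⟩ := t_cone f
  have h1 := ρ.rk1 hT
  have h2 := ρ.rk1 (t_iso hT i (Iso.refl _) (i.hom ≫ f) g (h ≫ i.inv⟦1⟧')
      (by simp) (by simp) (by simp [← CategoryTheory.Functor.map_comp]))
  linarith

lemma rk_tri2 {X Y Z : C} {f : X ⟶ Y} {g : Y ⟶ Z} {h : Z ⟶ X⟦(1 : ℤ)⟧}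
    (hT : Triangle.mk f g h ∈ distTriang C) :
    ρ.rank g + ρ.rank h = ρ.rank (𝟙 Z) := ρ.rk1 (t_rot hT)

lemma rk_neg {X Y : C} (f : X ⟶ Y) : ρ.rank (-f) = ρ.rank f := by
  have h := ρ.rk_comp_iso_left (W := X) (X := X)
    { hom := -𝟙 X, inv := -𝟙 X, hom_inv_id := by simp, inv_hom_id := by simp } f
  simpa using h

lemma rk_tri3 {X Y Z : C} {f : X ⟶ Y} {g : Y ⟶ Z} {h : Z ⟶ X⟦(1 : ℤ)⟧}
    (hT : Triangle.mk f g h ∈ distTriang C) :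
    ρ.rank h + ρ.rank f = ρ.rank (𝟙 X) := by
  have h := ρ.rk1 (t_rot (t_rot hT))
  rwa [rk_neg, ρ.shiftInv, rk_id_shift] at h

lemma rk_id_iso {X Y : C} (i : X ≅ Y) : ρ.rank (𝟙 X) = ρ.rank (𝟙 Y) := by
  have hT : Triangle.mk i.hom (0 : Y ⟶ 0) 0 ∈ distTriang C :=
    t_of_isIso₁ (isZero_zero C) inferInstance
  have h1 := ρ.rk1 hT
  have h2 := ρ.rk_tri3 hT
  have h3 := ρ.rk_id_zero (isZero_zero C) (0 : Y ⟶ 0)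
  have h4 := ρ.rk_from_zero (isZero_zero C) (0 : (0 : C) ⟶ X⟦(1 : ℤ)⟧)
  linarith

lemma rk_comp_iso_right {X Y Y' : C} (f : X ⟶ Y) (j : Y ≅ Y') :
    ρ.rank (f ≫ j.hom) = ρ.rank f := by
  obtain ⟨Z, g, h, hT⟩ := t_cone f
  have h2 := ρ.rk_tri3 hT
  have h1 := ρ.rk_tri3 (t_iso hT (Iso.refl _) j.symm (f ≫ j.hom) (j.inv ≫ g) h
      (by simp) (by simp) (by simp))
  linarith

lemma rk_lift_zero {B D D' : C} (b : B ⟶ D) :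
    ρ.rank (biprod.lift b (0 : B ⟶ D')) = ρ.rank b := by
  have h := ρ.additive b (0 : (0 : C) ⟶ D')
  rw [ρ.rk_from_zero (isZero_zero C), add_zero] at h
  rw [← h, ← ρ.rk_comp_iso_left (W := B) (X := B ⊞ (0 : C))
    { hom := biprod.inl, inv := biprod.fst, hom_inv_id := by simp
      inv_hom_id := by
        apply biprod.hom_ext
        · simp
        · exact (isZero_zero C).eq_of_tgt _ _ }]
  congr 1
  apply biprod.hom_ext <;> simp

lemma rk_desc_zero {B D D' : C} (b : B ⟶ D) :
    ρ.rank (biprod.desc b (0 : D' ⟶ D)) = ρ.rank b := by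
  have h := ρ.additive b (0 : D' ⟶ (0 : C))
  rw [ρ.rk_id_zero (isZero_zero C), add_zero] at h
  rw [← h, ← ρ.rk_comp_iso_right (Y := D ⊞ (0 : C)) (Y' := D) _
    { hom := biprod.fst, inv := biprod.inl, inv_hom_id := by simp
      hom_inv_id := by
        apply biprod.hom_ext
        · simp
        · exact (isZero_zero C).eq_of_tgt _ _ }]
  congr 1
  apply biprod.hom_ext' <;> simp

/-- shear automorphism of a biproduct -/
noncomputable def shear {D D' : C} (s : D ⟶ D') : D ⊞ D' ≅ D ⊞ D' where
  hom := 𝟙 _ + biprod.fst ≫ s ≫ biprod.inr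
  inv := 𝟙 _ - biprod.fst ≫ s ≫ biprod.inr
  hom_inv_id := by simp [Preadditive.add_comp, Preadditive.comp_sub]
  inv_hom_id := by simp [Preadditive.sub_comp, Preadditive.comp_add]

lemma rk_lift_comp {B D D' : C} (b : B ⟶ D) (s : D ⟶ D') :
    ρ.rank (biprod.lift b (b ≫ s)) = ρ.rank b := by
  rw [← ρ.rk_lift_zero (D' := D') b, ← ρ.rk_comp_iso_right (biprod.lift b 0) (shear s)]
  congr 1
  apply biprod.hom_ext <;> simp [shear]

lemma rk_desc_comp {B D D' : C} (b : B ⟶ D) (s : D' ⟶ B) :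
    ρ.rank (biprod.desc b (s ≫ b)) = ρ.rank b := by
  rw [← ρ.rk_desc_zero (D' := D') b]
  rw [← ρ.rk_comp_iso_left (W := B ⊞ D') (X := B ⊞ D')
    { hom := 𝟙 _ + biprod.snd ≫ s ≫ biprod.inl
      inv := 𝟙 _ - biprod.snd ≫ s ≫ biprod.inl
      hom_inv_id := by simp [Preadditive.add_comp, Preadditive.comp_sub]
      inv_hom_id := by simp [Preadditive.sub_comp, Preadditive.comp_add] }
    (biprod.desc b (0 : D' ⟶ D))]
  congr 1
  apply biprod.hom_ext' <;> simp

lemma rk_lift_swap {B D D' : C} (b : B ⟶ D) (b' : B ⟶ D') :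
    ρ.rank (biprod.lift b b') = ρ.rank (biprod.lift b' b) := by
  rw [← ρ.rk_comp_iso_right (biprod.lift b' b) (biprod.braiding _ _)]
  congr 1
  apply biprod.hom_ext <;> simp

lemma rk_desc_swap {B D D' : C} (b : D ⟶ B) (b' : D' ⟶ B) :
    ρ.rank (biprod.desc b b') = ρ.rank (biprod.desc b' b) := by
  rw [← ρ.rk_comp_iso_left (biprod.braiding _ _) (biprod.desc b' b)]
  congr 1
  apply biprod.hom_ext' <;> simp

lemma rk_eq_right {B D D' : C} (b : B ⟶ D) (b' : B ⟶ D') (s : D ⟶ D') (s' : D' ⟶ D)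
    (h : b ≫ s = b') (h' : b' ≫ s' = b) : ρ.rank b = ρ.rank b' := by
  rw [← ρ.rk_lift_comp b s, ← ρ.rk_lift_comp b' s', h, h', rk_lift_swap]

lemma rk_eq_left {B D D' : C} (b : D ⟶ B) (b' : D' ⟶ B) (s : D ⟶ D') (s' : D' ⟶ D)
    (h : s ≫ b' = b) (h' : s' ≫ b = b') : ρ.rank b = ρ.rank b' := by
  rw [← ρ.rk_desc_comp b s', ← ρ.rk_desc_comp b' s, h, h', rk_desc_swap]

lemma rk_weakCoker {A B D : C} (a : A ⟶ B) (b : B ⟶ D) (w : a ≫ b = 0)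
    (hb : ∀ ⦃E : C⦄ (u : B ⟶ E), a ≫ u = 0 → ∃ v, b ≫ v = u) :
    ρ.rank a + ρ.rank b = ρ.rank (𝟙 B) := by
  obtain ⟨Z, g, h, hT⟩ := t_cone a
  obtain ⟨v, hv⟩ := hb g (t_w12 hT)
  obtain ⟨v', hv'⟩ := t_y2 hT b w
  rw [ρ.rk_eq_right b g v v' hv hv'.symm]
  exact ρ.rk1 hT

lemma rk_weakKer {A B D : C} (a : A ⟶ B) (b : B ⟶ D) (w : a ≫ b = 0)
    (ha : ∀ ⦃E : C⦄ (u : E ⟶ B), u ≫ b = 0 → ∃ v, v ≫ a = u) :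
    ρ.rank a + ρ.rank b = ρ.rank (𝟙 B) := by
  obtain ⟨Z, g, h, hT⟩ := t_fiber b
  obtain ⟨v, hv⟩ := ha g (t_w12 hT)
  obtain ⟨v', hv'⟩ := t_c2 hT a w
  rw [ρ.rk_eq_left a g v' v hv'.symm hv]
  exact ρ.rk1 hT

lemma rk_biprod (X Y : C) : ρ.rank (𝟙 (X ⊞ Y)) = ρ.rank (𝟙 X) + ρ.rank (𝟙 Y) := by
  rw [← ρ.additive]; congr 1
  apply biprod.hom_ext <;> simp

/-- shift commutes with biproducts -/
noncomputable def shiftBiprod (X K : C) :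
    X⟦(1 : ℤ)⟧ ⊞ K⟦(1 : ℤ)⟧ ≅ (X ⊞ K)⟦(1 : ℤ)⟧ where
  hom := biprod.desc ((biprod.inl : X ⟶ X ⊞ K)⟦(1 : ℤ)⟧') ((biprod.inr : K ⟶ X ⊞ K)⟦(1 : ℤ)⟧')
  inv := biprod.lift ((biprod.fst : X ⊞ K ⟶ X)⟦(1 : ℤ)⟧') ((biprod.snd : X ⊞ K ⟶ K)⟦(1 : ℤ)⟧')
  hom_inv_id := by
    apply biprod.hom_ext <;> apply biprod.hom_ext' <;>
      simp [← CategoryTheory.Functor.map_comp]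
  inv_hom_id := by
    rw [biprod.lift_desc, ← CategoryTheory.Functor.map_comp, ← CategoryTheory.Functor.map_comp,
      ← CategoryTheory.Functor.map_add, biprod.total, CategoryTheory.Functor.map_id]

/-- key lemma -/
lemma rk_key {K Y V X : C} (k : K ⟶ Y) (c : Y ⟶ V) (d : V ⟶ K⟦(1 : ℤ)⟧)
    (hT : Triangle.mk k c d ∈ distTriang C) (f : X ⟶ Y) :
    ρ.rank (biprod.desc f k) = ρ.rank k + ρ.rank (f ≫ c) := by
  obtain ⟨N, q, r, hN⟩ := t_cone (f ≫ c)
  have hR := t_rot hT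
  obtain ⟨t, ht1, ht2⟩ := t_fill hN hR f (𝟙 V)
    (Category.comp_id _)
  rw [Category.id_comp] at ht1
  have kc : k ≫ c = 0 := t_w12 hT
  have cd : c ≫ d = 0 := t_w23 hT
  have fcq : (f ≫ c) ≫ q = 0 := t_w12 hN
  have qr : q ≫ r = 0 := t_w23 hN
  have e1 : ρ.rank (biprod.desc f k) + ρ.rank (c ≫ q) = ρ.rank (𝟙 Y) := by
    apply rk_weakCoker
    · apply biprod.hom_ext'
      · simpa using fcq
      · simp [reassoc_of% kc]
    · intro E u hu
      have hf : f ≫ u = 0 := by simpa using biprod.inl ≫= hu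
      have hk : k ≫ u = 0 := by simpa using biprod.inr ≫= hu
      obtain ⟨u', rfl⟩ := t_y2 hT u hk
      obtain ⟨u'', rfl⟩ := t_y2 hN u' (by simpa using hf)
      exact ⟨u'', by simp⟩
  have e2 : ρ.rank (c ≫ q) + ρ.rank (biprod.lift r t) = ρ.rank (𝟙 N) := by
    apply rk_weakKer
    · apply biprod.hom_ext
      · simp [qr]
      · simp [ht1, cd]
    · intro E u hu
      have hr : u ≫ r = 0 := by simpa using hu =≫ biprod.fst
      have ht : u ≫ t = 0 := by simpa using hu =≫ biprod.snd
      obtain ⟨v, rfl⟩ := t_c3 hN u hr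
      obtain ⟨w, rfl⟩ := t_c3 hT v (by simpa [ht1] using ht)
      exact ⟨w, by simp⟩
  have e3 : ρ.rank (biprod.lift r t) + ρ.rank (biprod.desc (f⟦(1 : ℤ)⟧') (k⟦(1 : ℤ)⟧'))
      = ρ.rank (𝟙 (X⟦(1 : ℤ)⟧ ⊞ K⟦(1 : ℤ)⟧)) := by
    apply rk_weakKer
    · rw [biprod.lift_desc, ht2]; simp
    · intro E u hu
      obtain ⟨x, y, rfl⟩ : ∃ x y, u = biprod.lift x y :=
        ⟨u ≫ biprod.fst, u ≫ biprod.snd, by apply biprod.hom_ext <;> simp⟩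
      rw [biprod.lift_desc] at hu
      have kc1 : k⟦(1 : ℤ)⟧' ≫ c⟦(1 : ℤ)⟧' = 0 := by rw [← CategoryTheory.Functor.map_comp, kc]; simp
      obtain ⟨n, hn⟩ := t_c1 hN x (by
        have := hu =≫ c⟦(1 : ℤ)⟧'
        simpa [kc1] using this)
      obtain ⟨v, hv⟩ := t_c1 hT (n ≫ t - y) (by
        have h5 : n ≫ r ≫ f⟦(1 : ℤ)⟧' = n ≫ t ≫ (-k⟦(1 : ℤ)⟧') := by rw [ht2]
        rw [hn, Category.assoc, h5] at hu
        have h6 : n ≫ t ≫ k⟦(1 : ℤ)⟧' = y ≫ k⟦(1 : ℤ)⟧' := by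
          simp only [Preadditive.comp_neg] at hu
          exact (neg_add_eq_zero.1 hu)
        simp [Preadditive.sub_comp, h6])
      refine ⟨n - v ≫ q, ?_⟩
      apply biprod.hom_ext
      · simp [Preadditive.sub_comp, qr, hn]
      · simp [Preadditive.sub_comp, ht1, ← hv]
  have e4 : ρ.rank (biprod.desc (f⟦(1 : ℤ)⟧') (k⟦(1 : ℤ)⟧')) = ρ.rank (biprod.desc f k) := by
    rw [← ρ.shiftInv (biprod.desc f k), ← ρ.rk_comp_iso_left (shiftBiprod X K)]
    congr 1
    apply biprod.hom_ext' <;> simp [shiftBiprod, ← CategoryTheory.Functor.map_comp]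
  rw [e4, rk_biprod, rk_id_shift, rk_id_shift] at e3
  have a1 := ρ.rk1 hT
  have a2 := ρ.rk_tri2 hT
  have a3 := ρ.rk_tri3 hT
  have b1 := ρ.rk1 hN
  have b2 := ρ.rk_tri2 hN
  have b3 := ρ.rk_tri3 hN
  linarith

lemma rk_comp_le_right {X Y V : C} (f : X ⟶ Y) (c : Y ⟶ V) :
    ρ.rank (f ≫ c) ≤ ρ.rank c := by
  obtain ⟨K, k, d, hT⟩ := t_fiber c
  have h1 := ρ.rk_key _ _ _ hT f
  obtain ⟨Z, g, h, hZ⟩ := t_cone (biprod.desc f k)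
  have h2 := ρ.rk1 hZ
  have h3 := ρ.rk1 hT
  have h4 := ρ.nonneg g
  linarith

lemma rk_star {X Y Z K V : C} {f : X ⟶ Y} {g : Y ⟶ Z} {h : Z ⟶ X⟦(1 : ℤ)⟧}
    (hT : Triangle.mk f g h ∈ distTriang C) {k : K ⟶ Y} {c : Y ⟶ V} {d : V ⟶ K⟦(1 : ℤ)⟧}
    (hT' : Triangle.mk k c d ∈ distTriang C) :
    ρ.rank g + ρ.rank (f ≫ c) = ρ.rank c + ρ.rank (k ≫ g) := by
  have h1 := ρ.rk_key _ _ _ hT k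
  have h2 := ρ.rk_key _ _ _ hT' f
  rw [rk_desc_swap] at h1
  have h3 := ρ.rk1 hT
  have h4 := ρ.rk1 hT'
  linarith

lemma rk_comp_le_left {K Y Z : C} (k : K ⟶ Y) (g : Y ⟶ Z) :
    ρ.rank (k ≫ g) ≤ ρ.rank k := by
  obtain ⟨M, n, e, hM⟩ := t_fiber (k ≫ g)
  obtain ⟨L, j, e', hL⟩ := t_fiber k
  have h1 := ρ.rk_star hM hL
  have h2 : j ≫ k = 0 := t_w12 hL
  have h3 : ρ.rank (j ≫ k ≫ g) = 0 := by
    rw [reassoc_of% h2, zero_comp]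
    have := ρ.rk_comp_le_right (0 : L ⟶ 0) (0 : (0 : C) ⟶ Z)
    rw [ρ.rk_from_zero (isZero_zero C), zero_comp] at this
    exact le_antisymm this (ρ.nonneg _)
  have := ρ.nonneg (n ≫ k)
  linarith

lemma rk_zero (X Y : C) : ρ.rank (0 : X ⟶ Y) = 0 := by
  have := ρ.rk_comp_le_right (0 : X ⟶ 0) (0 : (0 : C) ⟶ Y)
  rw [ρ.rk_from_zero (isZero_zero C), zero_comp] at this
  exact le_antisymm this (ρ.nonneg _)

lemma rk_comp_zero_right {X Y V : C} (f : X ⟶ Y) (c : Y ⟶ V) (h : ρ.rank c = 0) :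
    ρ.rank (f ≫ c) = 0 :=
  le_antisymm (h ▸ ρ.rk_comp_le_right f c) (ρ.nonneg _)

lemma rk_comp_zero_left {X Y V : C} (f : X ⟶ Y) (c : Y ⟶ V) (h : ρ.rank f = 0) :
    ρ.rank (f ≫ c) = 0 :=
  le_antisymm (h ▸ ρ.rk_comp_le_left f c) (ρ.nonneg _)

lemma rk_add {X Y : C} (f g : X ⟶ Y) (hf : ρ.rank f = 0) (hg : ρ.rank g = 0) :
    ρ.rank (f + g) = 0 := by
  have : f + g = biprod.lift (𝟙 X) (𝟙 X) ≫ biprod.map f g ≫ biprod.desc (𝟙 Y) (𝟙 Y) := by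
    have e : biprod.map f g ≫ biprod.desc (𝟙 Y) (𝟙 Y) = biprod.desc f g := by
      apply biprod.hom_ext' <;> simp
    rw [e, biprod.lift_desc, Category.id_comp, Category.id_comp]
  rw [this]
  apply rk_comp_zero_right
  apply rk_comp_zero_left
  rw [ρ.additive, hf, hg, add_zero]

/-- full rank maps -/
def Full {X Y : C} (f : X ⟶ Y) : Prop := ρ.rank f = ρ.rank (𝟙 Y)

lemma full_iff {X Y Z : C} {f : X ⟶ Y} {g : Y ⟶ Z} {h : Z ⟶ X⟦(1 : ℤ)⟧}
    (hT : Triangle.mk f g h ∈ distTriang C) : ρ.Full f ↔ ρ.rank g = 0 := by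
  have := ρ.rk1 hT
  unfold Full
  constructor <;> intro <;> linarith

lemma full_of_comp {X Y Z : C} (f : X ⟶ Y) (g : Y ⟶ Z) (h : ρ.Full (f ≫ g)) : ρ.Full g := by
  unfold Full at *
  apply le_antisymm
  · simpa using ρ.rk_comp_le_right g (𝟙 Z)
  · rw [← h]; exact ρ.rk_comp_le_right f g

lemma full_comp {W X Y : C} (e : W ⟶ X) (f : X ⟶ Y) (he : ρ.Full e) (hf : ρ.Full f) :
    ρ.Full (e ≫ f) := by
  obtain ⟨V, c, d, hc⟩ := t_cone (e ≫ f)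
  obtain ⟨Z, g, h, hg⟩ := t_cone f
  obtain ⟨U, a, b, ha⟩ := t_cone e
  rw [ρ.full_iff hc]
  rw [ρ.full_iff hg] at hf
  rw [ρ.full_iff ha] at he
  have h0 : (e ≫ f) ≫ c = 0 := t_w12 hc
  obtain ⟨s, hs⟩ := t_y2 ha (f ≫ c) (by simpa using h0)
  have h1 : ρ.rank (f ≫ c) = 0 := by rw [hs]; exact ρ.rk_comp_zero_left _ _ he
  have h2 := ρ.rk_star hg hc
  have := ρ.nonneg c
  have := ρ.nonneg ((e ≫ f) ≫ g)
  linarith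

lemma full_pullback {X Y Y' : C} (f : X ⟶ Y) (hf : ρ.Full f) (e : Y' ⟶ Y) :
    ∃ (X' : C) (f' : X' ⟶ Y') (a : X' ⟶ X), ρ.Full f' ∧ f' ≫ e = a ≫ f := by
  obtain ⟨Z, g, h, hg⟩ := t_cone f
  obtain ⟨X', f', h', hf'⟩ := t_fiber (e ≫ g)
  have h0 : f' ≫ e ≫ g = 0 := t_w12 hf'
  obtain ⟨a, ha⟩ := t_c2 hg (f' ≫ e) ((Category.assoc _ _ _).trans h0)
  refine ⟨X', f', a, ?_, ha⟩
  rw [ρ.full_iff hf']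
  rw [ρ.full_iff hg] at hf
  exact ρ.rk_comp_zero_right _ _ hf

/-- The topology attached to a rank function. -/
def topology : GrothendieckTopology C where
  sieves Y := {S | ∃ (X : C) (f : X ⟶ Y), S f ∧ ρ.Full f}
  top_mem' Y := ⟨Y, 𝟙 Y, trivial, rfl⟩
  pullback_stable' := by
    rintro Y Y' S e ⟨X, f, hf, hf'⟩
    obtain ⟨X', f', a, h1, h2⟩ := ρ.full_pullback f hf' e
    refine ⟨X', f', ?_, h1⟩
    change S (f' ≫ e)
    rw [h2]
    exact S.downward_closed hf a
  transitive' := by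
    rintro Y S ⟨X, f, hf, hf'⟩ R hR
    obtain ⟨W, e, he, he'⟩ := hR hf
    exact ⟨W, e ≫ f, he, ρ.full_comp e f he' hf'⟩

lemma mem_topology {Y : C} (S : Sieve Y) :
    S ∈ ρ.topology Y ↔ ∃ (X : C) (f : X ⟶ Y), S f ∧ ρ.Full f := Iff.rfl

end RankFunction

lemma yoneda_exact_aux (T : Triangle C) (hT : T ∈ distTriang C) :
    ∃ w : (preadditiveYoneda (C := C)).map T.mor₁ ≫ preadditiveYoneda.map T.mor₂ = 0,
      (ShortComplex.mk _ _ w).Exact := by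
  have w : (preadditiveYoneda (C := C)).map T.mor₁ ≫ preadditiveYoneda.map T.mor₂ = 0 := by
    rw [← Functor.map_comp, comp_distTriang_mor_zero₁₂ _ hT, Functor.map_zero]
  refine ⟨w, ?_⟩
  rw [ShortComplex.exact_iff_isZero_homology, Functor.isZero_iff]
  intro A
  refine IsZero.of_iso ?_ ((ShortComplex.mk _ _ w).mapHomologyIso
    ((evaluation Cᵒᵖ AddCommGrpCat.{v}).obj A)).symm
  rw [← ShortComplex.exact_iff_isZero_homology, ShortComplex.ab_exact_iff]
  intro (x₂ : A.unop ⟶ T.obj₂) (hx₂ : x₂ ≫ T.mor₂ = 0)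
  obtain ⟨x₁, hx₁⟩ := T.coyoneda_exact₂ hT x₂ hx₂
  exact ⟨x₁, hx₁.symm⟩

instance hasSheafify_aux (J : GrothendieckTopology C) : HasSheafify J AddCommGrpCat.{v} :=
  hasSheafifyEssentiallySmallSite.{v} J _

instance wEq_aux (J : GrothendieckTopology C) : J.WEqualsLocallyBijective AddCommGrpCat.{v} :=
  GrothendieckTopology.WEqualsLocallyBijective.ofEssentiallySmall.{v} J

/-- the cohomological functor -/
noncomputable def RankFunction.cohom (ρ : RankFunction C) : CohomFunctorTo C where
  A := Sheaf ρ.topology AddCommGrpCat.{v}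
  ab := sheafIsAbelian
  H := preadditiveYoneda ⋙ presheafToSheaf ρ.topology AddCommGrpCat.{v}
  cohomological T hT := by
    obtain ⟨w, hw⟩ := yoneda_exact_aux T hT
    exact ⟨_, hw.map (presheafToSheaf ρ.topology AddCommGrpCat.{v})⟩

lemma RankFunction.cohom_iff (ρ : RankFunction C) {X Y : C} (f : X ⟶ Y) :
    ρ.rank f = 0 ↔ ρ.cohom.H.map f = 0 := by
  let J := ρ.topology
  let φ : preadditiveYoneda.obj X ⟶ preadditiveYoneda.obj Y := preadditiveYoneda.map f
  have nat : φ ≫ toSheafify J (preadditiveYoneda.obj Y) =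
      toSheafify J (preadditiveYoneda.obj X) ≫ sheafifyMap J φ := toSheafify_naturality J φ
  obtain ⟨K, k, d, hT⟩ := RankFunction.t_fiber f
  have hfull : ρ.Full k ↔ ρ.rank f = 0 := ρ.full_iff hT
  constructor
  · intro hf
    have hs : Presheaf.IsLocallySurjective J
        ((preadditiveYoneda (C := C)).map k) := by
      constructor
      intro U (x : U ⟶ X)
      obtain ⟨U', u, a, h1, h2⟩ := ρ.full_pullback k (hfull.2 hf) x
      exact ⟨U', u, ⟨a, h2.symm⟩, h1⟩
    have hs' := (Presheaf.isLocallySurjective_presheafToSheaf_map_iff J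
      ((preadditiveYoneda (C := C)).map k)).2 hs
    have hepi : Epi (ρ.cohom.H.map k) :=
      Sheaf.epi_of_isLocallySurjective ((presheafToSheaf J AddCommGrpCat.{v}).map
        ((preadditiveYoneda (C := C)).map k))
    obtain ⟨w, -⟩ := ρ.cohom.cohomological _ hT
    change ρ.cohom.H.map k ≫ ρ.cohom.H.map f = 0 at w
    rw [← cancel_epi (ρ.cohom.H.map k), w, comp_zero]
  · intro hf
    have h0 : (presheafToSheaf J AddCommGrpCat.{v}).map φ = 0 := hf
    have h1 : sheafifyMap J φ = 0 := by
      change (sheafToPresheaf J AddCommGrpCat.{v}).map _ = 0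
      rw [h0, Functor.map_zero]
    rw [h1, comp_zero] at nat
    have h2 := Presheaf.equalizerSieve_mem J (toSheafify J (preadditiveYoneda.obj Y))
      (X := Opposite.op X) (f : X ⟶ Y) (0 : X ⟶ Y) (by
        have h3 := congrArg (fun z => z.app (Opposite.op X) (𝟙 X : X ⟶ X)) nat
        have h4 : φ.app (Opposite.op X) (𝟙 X : X ⟶ X) = f := Category.id_comp f
        refine Eq.trans ?_ (map_zero _).symm
        rw [← h4]
        exact h3)
    obtain ⟨W, e, he, he'⟩ := h2
    have he2 : e ≫ f = 0 := by
      have he3 : e ≫ f = e ≫ (0 : X ⟶ Y) := he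
      rw [he3, comp_zero]
    obtain ⟨a, rfl⟩ := RankFunction.t_c2 hT e he2
    exact hfull.1 (ρ.full_of_comp _ _ he')

theorem kernel_on_morphisms_is_sigmaClosed_cohomological_ideal (ρ : RankFunction C) :
    -- `Ker ρ` is an additive ideal:
    (∀ X Y : C, ρ.rank (0 : X ⟶ Y) = 0) ∧
    (∀ ⦃X Y : C⦄ (f g : X ⟶ Y), ρ.rank f = 0 → ρ.rank g = 0 → ρ.rank (f + g) = 0) ∧
    (∀ ⦃X Y : C⦄ (f : X ⟶ Y), ρ.rank f = 0 → ρ.rank (-f) = 0) ∧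
    (∀ ⦃W X Y : C⦄ (e : W ⟶ X) (f : X ⟶ Y), ρ.rank f = 0 → ρ.rank (e ≫ f) = 0) ∧
    (∀ ⦃X Y Z : C⦄ (f : X ⟶ Y) (e : Y ⟶ Z), ρ.rank f = 0 → ρ.rank (f ≫ e) = 0) ∧
    -- `Ker ρ` is Σ-closed:
    (∀ ⦃X Y : C⦄ (f : X ⟶ Y),
      ρ.rank f = 0 ↔ ρ.rank ((shiftFunctor C (1 : ℤ)).map f) = 0) ∧
    -- `Ker ρ` is a cohomological ideal:
    (∃ Φ : CohomFunctorTo C, ∀ ⦃X Y : C⦄ (f : X ⟶ Y),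
      ρ.rank f = 0 ↔ Φ.H.map f = 0) := by
  exact ⟨ρ.rk_zero, fun _ _ => ρ.rk_add, fun _ _ f hf => (ρ.rk_neg f).trans hf,
    fun _ _ _ => ρ.rk_comp_zero_right, fun _ _ _ => ρ.rk_comp_zero_left,
    fun _ _ f => by rw [ρ.shiftInv], ρ.cohom, fun _ _ => ρ.cohom_iff⟩
end
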